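/- arXiv:2205.09686 — 2 statements merged into one kernel-verified Lean document; each statement's English description precedes it below -/
import Mathlib

section
/- For every integer n ≥ 4, the number of Dyck paths of semilength n with L = 4 is |D_n^4| = 2·( T_{n-2,3} + Σ_{i=0}^{n-6} (i+1)·M_i·T_{n-4-i,3} ) + binom(n-5, 2)·M_{n-7} + M_{n-5} + 2·Σ_{i=0}^{n-7} (i+1)·M_i·M_{n-7-i}, where sums over empty ranges are 0 and any term containing M_j or T_{j,k} with j < 0 (or binom(m,2) with m < 2) is 0; moreover |D_3^4| = 1. -/
/-- A Dyck path of semilength `n`, encoded as a word on `Bool`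
(`true` = up step `u`, `false` = down step `d`). -/
def IsDyckWord (n : ℕ) (w : List Bool) : Prop :=
  w.length = 2 * n ∧ w.count true = n ∧ w.count false = n ∧
    ∀ p : List Bool, p <+: w → p.count false ≤ p.count true

/-- The (0-based) indices of the up steps of `w`. -/
def upIdxs (w : List Bool) : List ℕ := w.findIdxs (· == true)

/-- The (0-based) indices of the down steps of `w`. -/
def downIdxs (w : List Bool) : List ℕ := w.findIdxs (· == false)

/-- `rStat w i` is the number of `d`'s strictly between the `i`-th and the
`(i+1)`-st `u` of `w` (with `i` 1-indexed). -/
def rStat (w : List Bool) (i : ℕ) : ℕ :=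
  ((w.take ((upIdxs w).getD i 0)).drop ((upIdxs w).getD (i - 1) 0 + 1)).count false

/-- `sStat w i` is the number of `u`'s strictly between the `i`-th and the
`(i+1)`-st `d` of `w` (with `i` 1-indexed). -/
def sStat (w : List Bool) (i : ℕ) : ℕ :=
  ((w.take ((downIdxs w).getD i 0)).drop ((downIdxs w).getD (i - 1) 0 + 1)).count true

/-- The statistic `L(D) = ∏_{i=1}^{n-1} C(r_i + s_i, r_i)` of a Dyck path of semilength `n`. -/
def LStat (n : ℕ) (w : List Bool) : ℕ :=
  ∏ i ∈ Finset.Icc 1 (n - 1), Nat.choose (rStat w i + sStat w i) (rStat w i)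

/-- `dyckL n k` = the set `𝒟ₙᵏ` of Dyck paths of semilength `n` with `L(D) = k`. -/
def dyckL (n k : ℕ) : Set (List Bool) := {w | IsDyckWord n w ∧ LStat n w = k}

/-- A Motzkin path, encoded as a word on `Option Bool`
(`some true` = up, `some false` = down, `none` = horizontal). -/
def IsMotzkinWord (w : List (Option Bool)) : Prop :=
  w.count (some false) = w.count (some true) ∧
    ∀ p : List (Option Bool), p <+: w → p.count (some false) ≤ p.count (some true)

/-- `motzkin n` = the `n`-th Motzkin number `Mₙ`, the number of Motzkin paths of length `n`. -/
noncomputable def motzkin (n : ℕ) : ℕ :=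
  {w : List (Option Bool) | w.length = n ∧ IsMotzkinWord w}.ncard

/-- The Motzkin ballot number `T_{n,k}`: the number of Motzkin paths of length `n`
whose first down step is in position `k` (1-indexed); by convention `T_{k-1,k} = 1`,
counting the path of `k-1` horizontal steps. -/
noncomputable def motzkinBallot (n k : ℕ) : ℕ :=
  if n + 1 = k then 1
  else
    {w : List (Option Bool) | w.length = n ∧ IsMotzkinWord w ∧
      w.getD (k - 1) none = some false ∧ ∀ j < k - 1, w.getD j none ≠ some false}.ncard

/-- Motzkin numbers with integer index: `Mᵢ = 0` for `i < 0`. -/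
noncomputable def motzkinZ (i : ℤ) : ℤ := if 0 ≤ i then (motzkin i.toNat : ℤ) else 0

/-- Motzkin ballot numbers with integer first index: `T_{n,k} = 0` for `n < 0`. -/
noncomputable def motzkinBallotZ (n : ℤ) (k : ℕ) : ℤ :=
  if 0 ≤ n then (motzkinBallot n.toNat k : ℤ) else 0

/-- The set of returns of a Dyck path `w` of semilength `n`:
indices `1 ≤ k ≤ n` such that the path touches the `x`-axis after `2k` steps. -/
def returns (n : ℕ) (w : List Bool) : Finset ℕ :=
  (Finset.Icc 1 n).filter fun k => (w.take (2 * k)).count false = (w.take (2 * k)).count true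

/-- `dyckRS n r s` = the set `𝒟ₙ^{r,s}` of Dyck paths of semilength `n` having exactly one
index `i` with `rᵢ > 0` and `sᵢ > 0`, and such that at that index `rᵢ = r` and `sᵢ = s`. -/
def dyckRS (n r s : ℕ) : Set (List Bool) :=
  {w | IsDyckWord n w ∧ ∃ i ∈ Finset.Icc 1 (n - 1),
    (0 < rStat w i ∧ 0 < sStat w i) ∧ rStat w i = r ∧ sStat w i = s ∧
      ∀ j ∈ Finset.Icc 1 (n - 1), 0 < rStat w j ∧ 0 < sStat w j → j = i}

/-- `twoStars n w k₁ k₂` says that `k₁ < k₂` are exactly the two indices `i` of `w`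
with `rᵢ > 0` and `sᵢ > 0`. -/
def twoStars (n : ℕ) (w : List Bool) (k₁ k₂ : ℕ) : Prop :=
  k₁ ∈ Finset.Icc 1 (n - 1) ∧ k₂ ∈ Finset.Icc 1 (n - 1) ∧ k₁ < k₂ ∧
    (0 < rStat w k₁ ∧ 0 < sStat w k₁) ∧ (0 < rStat w k₂ ∧ 0 < sStat w k₂) ∧
    ∀ j ∈ Finset.Icc 1 (n - 1), 0 < rStat w j ∧ 0 < sStat w j → j = k₁ ∨ j = k₂

/-- `xStat w k` = the number of indices `i < k` with `rᵢ = 0` and `sᵢ > 0`. -/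
def xStat (w : List Bool) (k : ℕ) : ℕ :=
  ((Finset.Ico 1 k).filter fun i => rStat w i = 0 ∧ 0 < sStat w i).card

/-- `yStat w k` = the number of indices `i < k` with `rᵢ > 0` and `sᵢ = 0`. -/
def yStat (w : List Bool) (k : ℕ) : ℕ :=
  ((Finset.Ico 1 k).filter fun i => 0 < rStat w i ∧ sStat w i = 0).card

/-- The generating function `m(x) = Σ Mₙ xⁿ` of the Motzkin numbers, over `ℚ`. -/
noncomputable def motzkinGF : PowerSeries ℚ := PowerSeries.mk fun n => (motzkin n : ℚ)

/-!
For a Dyck path of semilength `n`, record for each `i` whether `rᵢ > 0` (down), `sᵢ > 0` (up), both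
(starred horizontal) or neither (horizontal). This is a bijection onto the Motzkin paths of length
`n - 1` with some horizontal steps starred, and only the stars contribute to `L`. Count the up steps
and stars backwards from a star at height `h`, starting with `0` for the star itself; then `rᵢ` is
the distance from the `h`-th to the next one, or to the start of the path if there is no next one.
Symmetrically, `sᵢ` is a distance between down steps or stars after it.

For `r, s ≥ 1`, the number `binom(r + s, r)` is at least `2`, it is `2` only for `r = s = 1`, and
`4` only for `{r, s} = {1, 3}`. So `L = 4` means that there is a single star, with
`{r, s} = {1, 3}`, or that there are two stars, both with `r = s = 1`. Let `m` be the generating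
function of the Motzkin paths and `q = X m`. The paths from height `h` to `0` whose `k`-th and
`(k + 1)`-st down steps, `k ≤ h`, have distance `r + 1` are counted by `(X + X q) ^ r * q ^ h`, and
the factors `q ^ (2 h)` that arise from the two sides of a star at height `h` sum up to
`1 / (1 - q ^ 2) = 1 + X ^ 2 q'`. The coefficients of `q' = ∑ (i + 1) Mᵢ Xⁱ` are those of the sums
in the formula.
-/

namespace DyckFour

open PowerSeries Finset
open scoped PowerSeries.WithPiTopology

section WordSeries

variable {R : Type*} [CommRing R] {σ α β : Type*} [Fintype α] [Fintype β]

theorem eq_of_contracting {F G : σ → R⟦X⟧}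
    (h : ∀ n, (∀ s, X ^ n ∣ F s - G s) → ∀ s, X ^ (n + 1) ∣ F s - G s) (s : σ) : F s = G s := by
  have key : ∀ n s, X ^ n ∣ F s - G s := fun n => by
    induction n with
    | zero => simp
    | succ n ih => exact h n ih
  refine sub_eq_zero.mp (PowerSeries.ext fun n => ?_)
  exact X_pow_dvd_iff.mp (key (n + 1) s) n n.lt_succ_self

theorem eq_of_recursion {F G e : σ → R⟦X⟧} {δ : α → σ → σ}
    (hF : ∀ s, F s = e s + X * ∑ a, F (δ a s)) (hG : ∀ s, G s = e s + X * ∑ a, G (δ a s))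
    (s : σ) : F s = G s := by
  refine eq_of_contracting (fun n ih s => ?_) s
  have hsub : F s - G s = X * ∑ a, (F (δ a s) - G (δ a s)) := by
    rw [hF, hG, sum_sub_distrib]; ring
  rw [hsub, pow_succ']
  exact mul_dvd_mul_left X (dvd_sum fun a _ => ih (δ a s))

/-- The coefficients of `wordSeries`, by recursion on the first letter. -/
noncomputable def wordCoeff : ℕ → (List α → R⟦X⟧) → R
  | 0, φ => coeff 0 (φ [])
  | n + 1, φ => coeff (n + 1) (φ []) + ∑ a, wordCoeff n fun w => φ (a :: w)

/-- The generating function `∑ w, X ^ |w| * φ w` over all words in the alphabet `α`. It is defined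
through its functional equation `wordSeries_eq`, so that no convergence has to be discussed. -/
noncomputable def wordSeries (φ : List α → R⟦X⟧) : R⟦X⟧ := .mk fun n => wordCoeff n φ

theorem wordSeries_eq (φ : List α → R⟦X⟧) :
    wordSeries φ = φ [] + X * ∑ a, wordSeries fun w => φ (a :: w) := by
  ext n
  cases n with
  | zero => simp [wordSeries, wordCoeff]
  | succ n => simp [wordSeries, wordCoeff, coeff_succ_X_mul]

theorem wordSeries_congr {φ ψ : List α → R⟦X⟧} (h : ∀ w, φ w = ψ w) :
    wordSeries φ = wordSeries ψ := congrArg wordSeries (funext h)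

theorem wordSeries_mul_left (c : R⟦X⟧) (φ : List α → R⟦X⟧) :
    wordSeries (fun w => c * φ w) = c * wordSeries φ := by
  refine eq_of_recursion (F := fun φ : List α → R⟦X⟧ => wordSeries fun w => c * φ w)
    (G := fun φ => c * wordSeries φ) (e := fun φ => c * φ []) (δ := fun a φ w => φ (a :: w))
    (fun φ => wordSeries_eq _) (fun φ => ?_) φ
  simp only [← mul_sum]
  rw [wordSeries_eq φ]
  ring

theorem wordSeries_mul_right (c : R⟦X⟧) (φ : List α → R⟦X⟧) :
    wordSeries (fun w => φ w * c) = wordSeries φ * c := by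
  simp only [mul_comm _ c, wordSeries_mul_left]

theorem wordSeries_mul_wordSeries (φ : List α → R⟦X⟧) (ψ : List β → R⟦X⟧) :
    (wordSeries fun u => wordSeries fun v => φ u * ψ v) = wordSeries φ * wordSeries ψ := by
  simp only [wordSeries_mul_left, wordSeries_mul_right]

@[simp] theorem wordSeries_zero : wordSeries (fun _ : List α => (0 : R⟦X⟧)) = 0 := by
  simpa using wordSeries_mul_left 0 fun _ : List α => (0 : R⟦X⟧)

theorem wordSeries_add (φ ψ : List α → R⟦X⟧) :
    wordSeries (fun w => φ w + ψ w) = wordSeries φ + wordSeries ψ := by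
  refine eq_of_recursion
    (F := fun p : (List α → R⟦X⟧) × (List α → R⟦X⟧) => wordSeries fun w => p.1 w + p.2 w)
    (G := fun p => wordSeries p.1 + wordSeries p.2) (e := fun p => p.1 [] + p.2 [])
    (δ := fun a p => (fun w => p.1 (a :: w), fun w => p.2 (a :: w)))
    (fun p => wordSeries_eq _) (fun p => ?_) (φ, ψ)
  simp only [sum_add_distrib]
  rw [wordSeries_eq p.1, wordSeries_eq p.2]
  ring

theorem wordSeries_sum {ι : Type*} (s : Finset ι) (φ : ι → List α → R⟦X⟧) :
    wordSeries (fun w => ∑ i ∈ s, φ i w) = ∑ i ∈ s, wordSeries (φ i) := by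
  induction s using Finset.cons_induction with
  | empty => simp [wordSeries_zero]
  | cons i s hi ih => simp only [sum_cons, wordSeries_add, ih]

theorem wordSeries_comm (φ : List α → List β → R⟦X⟧) :
    wordSeries (fun u => wordSeries (φ u)) = wordSeries fun v => wordSeries fun u => φ u v := by
  refine eq_of_recursion
    (F := fun φ : List α → List β → R⟦X⟧ => wordSeries fun u => wordSeries (φ u))
    (G := fun φ => wordSeries fun v => wordSeries fun u => φ u v)
    (e := fun φ => wordSeries (φ [])) (δ := fun a φ u => φ (a :: u))
    (fun φ => wordSeries_eq _) (fun φ => ?_) φ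
  rw [← wordSeries_sum, ← wordSeries_mul_left, ← wordSeries_add]
  exact wordSeries_congr fun v => wordSeries_eq _

theorem wordSeries_eq_append (φ : List α → R⟦X⟧) :
    wordSeries φ = φ [] + X * ∑ a, wordSeries fun w => φ (w ++ [a]) := by
  refine eq_of_recursion (F := wordSeries) (e := fun φ : List α → R⟦X⟧ => φ [])
    (G := fun φ => φ [] + X * ∑ a, wordSeries fun w => φ (w ++ [a]))
    (δ := fun a φ w => φ (a :: w)) wordSeries_eq (fun φ => ?_) φ
  simp only [wordSeries_eq fun w => φ (w ++ [_]), List.nil_append, List.cons_append,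
    sum_add_distrib, ← mul_sum]
  rw [sum_comm]

theorem wordSeries_reverse (φ : List α → R⟦X⟧) :
    wordSeries (fun w => φ w.reverse) = wordSeries φ := by
  refine eq_of_recursion (F := fun φ : List α → R⟦X⟧ => wordSeries fun w => φ w.reverse)
    (G := wordSeries) (e := fun φ => φ []) (δ := fun a φ w => φ (w ++ [a]))
    (fun φ => ?_) wordSeries_eq_append φ
  rw [wordSeries_eq]
  simp

theorem wordSeries_map (e : α ≃ β) (φ : List β → R⟦X⟧) :
    wordSeries (fun w => φ (w.map e)) = wordSeries φ := by
  refine eq_of_recursion (F := fun φ : List β → R⟦X⟧ => wordSeries fun w => φ (w.map e))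
    (G := wordSeries) (e := fun φ => φ []) (δ := fun b φ w => φ (b :: w))
    (fun φ => ?_) wordSeries_eq φ
  rw [wordSeries_eq, ← e.sum_comp]
  simp

theorem wordSeries_append (φ : List α → List α → R⟦X⟧) :
    wordSeries (fun u => wordSeries (φ u)) =
      wordSeries fun w => ∑ i ∈ range (w.length + 1), φ (w.take i) (w.drop i) := by
  refine eq_of_recursion
    (F := fun φ : List α → List α → R⟦X⟧ => wordSeries fun u => wordSeries (φ u))
    (G := fun φ => wordSeries fun w => ∑ i ∈ range (w.length + 1), φ (w.take i) (w.drop i))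
    (e := fun φ => wordSeries (φ [])) (δ := fun a φ u => φ (a :: u))
    (fun φ => wordSeries_eq _) (fun φ => ?_) φ
  simp only [sum_range_succ', List.take_zero, List.drop_zero, wordSeries_add]
  rw [add_comm, wordSeries_eq fun w => ∑ i ∈ range w.length, φ (w.take (i + 1)) (w.drop (i + 1))]
  simp [sum_range_succ', wordSeries_add]

theorem wordSeries_option (φ : List (Option α) → R⟦X⟧) :
    wordSeries φ = wordSeries fun u : List α =>
      φ (u.map some) + X * wordSeries fun v => φ (u.map some ++ none :: v) := by
  refine eq_of_recursion (F := wordSeries)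
    (G := fun φ : List (Option α) → R⟦X⟧ => wordSeries fun u : List α =>
      φ (u.map some) + X * wordSeries fun v => φ (u.map some ++ none :: v))
    (e := fun φ => φ [] + X * wordSeries fun v => φ (none :: v))
    (δ := fun a φ w => φ (some a :: w)) (fun φ => ?_) (fun φ => wordSeries_eq _) φ
  rw [wordSeries_eq, Fintype.sum_option]
  ring

theorem hasSum_wordSeries [TopologicalSpace R] [IsTopologicalRing R] {ι : Type*}
    {φ : ι → List α → R⟦X⟧} {ψ : List α → R⟦X⟧} (h : ∀ w, HasSum (fun i => φ i w) (ψ w)) :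
    HasSum (fun i => wordSeries (φ i)) (wordSeries ψ) := by
  rw [WithPiTopology.hasSum_iff_hasSum_coeff]
  intro n
  have hcoeff w n := (WithPiTopology.hasSum_iff_hasSum_coeff R).mp (h w) n
  clear h
  simp only [wordSeries, coeff_mk]
  induction n generalizing φ ψ with
  | zero => exact hcoeff [] 0
  | succ n ih =>
    exact (hcoeff [] (n + 1)).add (hasSum_sum fun a _ => ih fun w m => hcoeff (a :: w) m)

end WordSeries

section Indicator

variable {R : Type*} [CommRing R] {α : Type*} [Fintype α]

open Classical in
/-- The Iverson bracket of a proposition, as a constant power series. -/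
noncomputable def ind (P : Prop) : R⟦X⟧ := if P then 1 else 0

theorem ind_of_pos {P : Prop} (h : P) : (ind P : R⟦X⟧) = 1 := if_pos h

theorem ind_of_neg {P : Prop} (h : ¬P) : (ind P : R⟦X⟧) = 0 := if_neg h

@[simp] theorem ind_true : (ind True : R⟦X⟧) = 1 := ind_of_pos trivial

@[simp] theorem ind_false : (ind False : R⟦X⟧) = 0 := ind_of_neg not_false

theorem ind_and (P Q : Prop) : (ind (P ∧ Q) : R⟦X⟧) = ind P * ind Q := by
  by_cases hP : P <;> by_cases hQ : Q <;> simp [ind, hP, hQ]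

theorem ind_or {P Q : Prop} (h : ¬(P ∧ Q)) :
    (ind (P ∨ Q) : R⟦X⟧) = ind P + ind Q := by
  by_cases hP : P <;> by_cases hQ : Q <;> simp_all

theorem hasSum_ind_exists [TopologicalSpace R] {ι : Type*} {P : ι → Prop}
    (h : ∀ i j, P i → P j → i = j) : HasSum (fun i => (ind (P i) : R⟦X⟧)) (ind (∃ i, P i)) := by
  by_cases hP : ∃ i, P i
  · obtain ⟨i, hi⟩ := hP
    rw [ind_of_pos ⟨i, hi⟩, ← ind_of_pos hi]
    exact hasSum_single i fun j hj => ind_of_neg fun hPj => hj (h j i hPj hi)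
  · rw [ind_of_neg hP]
    simp only [not_exists] at hP
    simpa only [ind_of_neg (hP _)] using hasSum_zero

theorem coeff_wordSeries_length_mul (n : ℕ) (a : ℕ → ℕ)
    (P : List α → Prop) : coeff n (wordSeries fun w => (a w.length : R⟦X⟧) * ind (P w)) =
      (a n : R) * coeff n (wordSeries fun w => ind (P w) : R⟦X⟧) := by
  have hC (k : ℕ) : (k : R⟦X⟧) = C (k : R) := (map_natCast C k).symm
  induction n generalizing a P with
  | zero =>
    rw [wordSeries_eq, wordSeries_eq fun w => ind (P w)]
    simp only [hC, map_add, coeff_C_mul, coeff_zero_X_mul, add_zero, List.length_nil]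
  | succ n ih =>
    have hnil (k : ℕ) : coeff (n + 1) ((k : R⟦X⟧) * ind (P [])) = 0 := by
      rw [hC, coeff_C_mul]
      by_cases hP : P [] <;> simp [ind, hP, coeff_one]
    rw [wordSeries_eq, wordSeries_eq fun w => ind (P w)]
    have hind := hnil 1
    rw [Nat.cast_one, one_mul] at hind
    simp only [map_add, hnil, hind, zero_add, coeff_succ_X_mul, map_sum, List.length_cons,
      ih (fun k => a (k + 1)), mul_sum]

theorem ncard_eq_coeff_wordSeries (n : ℕ) (P : List α → Prop) :
    ({w | w.length = n ∧ P w}.ncard : R) = coeff n (wordSeries fun w => ind (P w) : R⟦X⟧) := by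
  induction n generalizing P with
  | zero =>
    by_cases hP : P []
    · have : {w | w.length = 0 ∧ P w} = {[]} := by ext w; simp; grind
      simp only [this, Set.ncard_singleton, wordSeries, wordCoeff, ind_of_pos hP, coeff_mk]
      simp
    · have : {w | w.length = 0 ∧ P w} = ∅ := by ext w; simp; grind
      simp only [this, Set.ncard_empty, wordSeries, wordCoeff, ind_of_neg hP, coeff_mk]
      simp
  | succ n ih =>
    have hfin (a : α) : Finite {w : List α | w.length = n ∧ P (a :: w)} :=
      ((List.finite_length_eq α n).subset fun w hw => hw.1).to_subtype
    let e : {w : List α | w.length = n + 1 ∧ P w} ≃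
        Σ a : α, {w : List α | w.length = n ∧ P (a :: w)} :=
      { toFun := fun ⟨w, hw⟩ => match w, hw with
          | a :: w, hw => ⟨a, w, by simpa using hw⟩
        invFun := fun ⟨a, w, hw⟩ => ⟨a :: w, by simpa using hw⟩
        left_inv := fun ⟨w, hw⟩ => match w, hw with
          | a :: w, hw => rfl
        right_inv := fun ⟨a, w, hw⟩ => rfl }
    have hconst : coeff (n + 1) (ind (P []) : R⟦X⟧) = 0 := by
      by_cases hP : P [] <;> simp [ind, hP, coeff_one]
    rw [wordSeries_eq, map_add, coeff_succ_X_mul, hconst, zero_add, map_sum, ← Nat.card_coe_set_eq,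
      Nat.card_congr e, Nat.card_sigma]
    push_cast
    exact sum_congr rfl fun a _ => ih fun w => P (a :: w)

end Indicator

section Walk

/-- A step of a lattice path: `some true` is up, `some false` is down, `none` is horizontal. -/
abbrev Step := Option Bool

/-- The positions of the down steps, as a mask. -/
def downs (w : List Step) : List Bool := w.map (· == some false)

/-- The positions of the up steps, as a mask. -/
def ups (w : List Step) : List Bool := w.map (· == some true)

/-- The number of down steps. -/
def numDown (w : List Step) : ℕ := (downs w).count true

/-- The number of up steps. -/
def numUp (w : List Step) : ℕ := (ups w).count true

@[simp] theorem downs_nil : downs [] = [] := rfl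
@[simp] theorem downs_none (w) : downs (none :: w) = false :: downs w := rfl
@[simp] theorem downs_up (w) : downs (some true :: w) = false :: downs w := rfl
@[simp] theorem downs_down (w) : downs (some false :: w) = true :: downs w := rfl
@[simp] theorem ups_nil : ups [] = [] := rfl
@[simp] theorem ups_none (w) : ups (none :: w) = false :: ups w := rfl
@[simp] theorem ups_up (w) : ups (some true :: w) = true :: ups w := rfl
@[simp] theorem ups_down (w) : ups (some false :: w) = false :: ups w := rfl
@[simp] theorem numDown_nil : numDown [] = 0 := rfl
@[simp] theorem numDown_none (w) : numDown (none :: w) = numDown w := by simp [numDown]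
@[simp] theorem numDown_up (w) : numDown (some true :: w) = numDown w := by simp [numDown]
@[simp] theorem numDown_down (w) : numDown (some false :: w) = numDown w + 1 := by simp [numDown]
@[simp] theorem numUp_nil : numUp [] = 0 := rfl
@[simp] theorem numUp_none (w) : numUp (none :: w) = numUp w := by simp [numUp]
@[simp] theorem numUp_up (w) : numUp (some true :: w) = numUp w + 1 := by simp [numUp]
@[simp] theorem numUp_down (w) : numUp (some false :: w) = numUp w := by simp [numUp]

/-- `Walk a b w` says that `w` leads from height `a` to height `b` without going below `0`. -/
def Walk : ℕ → ℕ → List Step → Prop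
  | a, b, [] => a = b
  | a, b, none :: w => Walk a b w
  | a, b, some true :: w => Walk (a + 1) b w
  | 0, _, some false :: _ => False
  | a + 1, b, some false :: w => Walk a b w

@[simp] theorem walk_nil (a b : ℕ) : Walk a b [] ↔ a = b := by cases a <;> simp [Walk]

@[simp] theorem walk_none (a b : ℕ) (w) : Walk a b (none :: w) ↔ Walk a b w := by
  cases a <;> simp [Walk]

@[simp] theorem walk_up (a b : ℕ) (w) : Walk a b (some true :: w) ↔ Walk (a + 1) b w := by
  cases a <;> simp [Walk]

@[simp] theorem walk_zero_down (b : ℕ) (w) : ¬Walk 0 b (some false :: w) := by simp [Walk]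

@[simp] theorem walk_succ_down (a b : ℕ) (w) : Walk (a + 1) b (some false :: w) ↔ Walk a b w := by
  simp [Walk]

theorem Walk.height {a b : ℕ} {w : List Step} (h : Walk a b w) :
    a + numUp w = b + numDown w := by
  induction w generalizing a with
  | nil => simpa using h
  | cons x w ih =>
    rcases x with _ | _ | _
    · simpa using ih (by simpa using h)
    · cases a with
      | zero => simp at h
      | succ a => have := ih (by simpa using h); simp; omega
    · have := ih (by simpa using h)
      simp
      omega

theorem walk_append {a b : ℕ} {u v : List Step} :
    Walk a b (u ++ v) ↔ ∃ c, Walk a c u ∧ Walk c b v := by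
  induction u generalizing a with
  | nil => simp
  | cons x u ih =>
    rcases x with _ | _ | _
    · simp [ih]
    · cases a <;> simp [ih]
    · simp [ih]

theorem walk_of_numDown_le {a b : ℕ} {w : List Step} (ha : numDown w ≤ a) :
    Walk a b w ↔ a + numUp w = b + numDown w := by
  refine ⟨Walk.height, fun h => ?_⟩
  induction w generalizing a with
  | nil => simpa using h
  | cons x w ih =>
    rcases x with _ | _ | _
    · simp_all
    · obtain ⟨a, rfl⟩ : ∃ c, a = c + 1 := ⟨a - 1, by simp at ha; omega⟩
      simp only [numDown_down, numUp_down, walk_succ_down] at *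
      exact ih (by omega) (by omega)
    · simp only [numDown_up, numUp_up, walk_up] at *
      exact ih (by omega) (by omega)

theorem walk_zero_iff {a : ℕ} {w : List Step} :
    Walk a 0 w ↔ a + numUp w = numDown w ∧ ∀ j, numUp (w.drop j) ≤ numDown (w.drop j) := by
  induction w generalizing a with
  | nil => simp
  | cons x w ih =>
    have drop_cons (h : a + numUp (x :: w) = numDown (x :: w)) :
        (∀ j, numUp ((x :: w).drop j) ≤ numDown ((x :: w).drop j)) ↔
          ∀ j, numUp (w.drop j) ≤ numDown (w.drop j) := by
      refine ⟨fun H j => H (j + 1), fun H j => ?_⟩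
      cases j with
      | zero => simp only [List.drop_zero]; omega
      | succ j => exact H j
    rw [and_congr_right drop_cons]
    rcases x with _ | _ | _
    · simp [ih]
    · cases a with
      | zero =>
        simp only [walk_zero_down, numUp_down, numDown_down, false_iff, not_and, not_forall]
        exact fun h => ⟨0, by simp; omega⟩
      | succ a => simp [ih, add_right_comm]
    · simp [ih, add_right_comm, add_assoc]

theorem walk_iff_forall_count_le {a b : ℕ} {w : List Step} :
    Walk a b w ↔ b + w.count (some false) = a + w.count (some true) ∧
      ∀ p, p <+: w → p.count (some false) ≤ a + p.count (some true) := by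
  induction w generalizing a with
  | nil => simp [eq_comm]
  | cons x w ih =>
    have prefix_cons (Q : List Step → Prop) :
        (∀ p, p <+: x :: w → Q p) ↔ Q [] ∧ ∀ p, p <+: w → Q (x :: p) := by
      simp only [List.prefix_cons_iff]
      constructor
      · exact fun H => ⟨H _ (.inl rfl), fun p hp => H _ (.inr ⟨p, rfl, hp⟩)⟩
      · rintro ⟨H, H'⟩ p (rfl | ⟨t, rfl, ht⟩)
        exacts [H, H' t ht]
    rw [prefix_cons]
    rcases x with _ | _ | _
    · simp [ih]
    · cases a with
      | zero => simpa using fun _ => ⟨[], by simp⟩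
      | succ a =>
        simp only [walk_succ_down, ih, List.count_cons_self, List.count_nil, Nat.zero_le, true_and,
          List.count_cons_of_ne (show some false ≠ some true by simp)]
        exact and_congr (by omega) (forall₂_congr fun p _ => by omega)
    · simp only [walk_up, ih, List.count_cons_self, List.count_nil, Nat.zero_le, true_and,
          List.count_cons_of_ne (show some true ≠ some false by simp)]
      exact and_congr (by omega) (forall₂_congr fun p _ => by omega)

theorem isMotzkinWord_iff_walk {w : List Step} : IsMotzkinWord w ↔ Walk 0 0 w := by
  simp [walk_iff_forall_count_le, IsMotzkinWord]

/-- The mirror image of a path: it is reversed, and up and down steps are exchanged. -/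
def mirror (w : List Step) : List Step :=
  (w.map (Equiv.optionCongr Equiv.boolNot)).reverse

theorem mirror_cons (x : Step) (w : List Step) :
    mirror (x :: w) = mirror w ++ [Equiv.optionCongr Equiv.boolNot x] := by simp [mirror]

theorem walk_mirror {a b : ℕ} {w : List Step} : Walk a b (mirror w) ↔ Walk b a w := by
  induction w generalizing b with
  | nil => simp [mirror, eq_comm]
  | cons x w ih =>
    rw [mirror_cons, walk_append]
    rcases x with _ | _ | _
    · simp [ih]
    · cases b <;> simp [ih]
    · simp only [ih, walk_up, Equiv.optionCongr_apply, Option.map_some, Equiv.boolNot_apply,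
        Bool.not_true]
      constructor
      · rintro ⟨_ | c, h1, h2⟩
        · simp at h2
        · rw [walk_succ_down, walk_nil] at h2
          rwa [← h2]
      · exact fun h => ⟨b + 1, h, by simp⟩

theorem downs_mirror (w : List Step) : downs (mirror w) = (ups w).reverse := by
  simp only [downs, ups, mirror, List.map_reverse, List.map_map]
  congr 2
  funext x
  rcases x with _ | _ | _ <;> rfl

theorem ups_mirror (w : List Step) : ups (mirror w) = (downs w).reverse := by
  simp only [downs, ups, mirror, List.map_reverse, List.map_map]
  congr 2
  funext x
  rcases x with _ | _ | _ <;> rfl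

theorem numDown_mirror (w : List Step) : numDown (mirror w) = numUp w := by
  simp [numDown, numUp, downs_mirror]

theorem wordSeries_mirror {R : Type*} [CommRing R] (φ : List Step → R⟦X⟧) :
    wordSeries (fun w => φ (mirror w)) = wordSeries φ := by
  simp only [mirror]
  rw [wordSeries_map _ fun w => φ w.reverse, wordSeries_reverse]

end Walk

section MotzkinSeries

theorem wordSeries_step {R : Type*} [CommRing R] (φ : List Step → R⟦X⟧) :
    wordSeries φ = φ [] + X * (wordSeries (fun w => φ (none :: w)) +
      wordSeries (fun w => φ (some true :: w)) + wordSeries fun w => φ (some false :: w)) := by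
  rw [wordSeries_eq, Fintype.sum_option, Fintype.sum_bool, add_assoc]

/-- The generating function `m` of the Motzkin paths. -/
noncomputable def mSeries : ℤ⟦X⟧ := wordSeries fun w => ind (Walk 0 0 w)

/-- The series `q = X m`; walks from height `h` to `0` are counted by `m q ^ h`. -/
noncomputable def qSeries : ℤ⟦X⟧ := X * mSeries

theorem motzkin_eq_coeff (n : ℕ) : (motzkin n : ℤ) = coeff n mSeries := by
  simp only [motzkin, isMotzkinWord_iff_walk]
  exact ncard_eq_coeff_wordSeries n _

theorem wordSeries_walk_zero : (wordSeries fun w => ind (Walk 0 0 w) : ℤ⟦X⟧) =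
    1 + X * (mSeries + wordSeries fun w => ind (Walk 1 0 w)) := by
  rw [wordSeries_step]
  simp [mSeries]

theorem wordSeries_walk_succ (h : ℕ) : (wordSeries fun w => ind (Walk (h + 1) 0 w) : ℤ⟦X⟧) =
    X * (wordSeries (fun w => ind (Walk (h + 1) 0 w)) +
      wordSeries (fun w => ind (Walk (h + 2) 0 w)) + wordSeries fun w => ind (Walk h 0 w)) := by
  conv_lhs => rw [wordSeries_step]
  simp

theorem wordSeries_walk_first_passage (h : ℕ) :
    (wordSeries fun w => ind (Walk (h + 1) 0 w) : ℤ⟦X⟧) =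
      qSeries * wordSeries fun w => ind (Walk h 0 w) := by
  set W : ℕ → ℤ⟦X⟧ := fun h => wordSeries fun w => ind (Walk h 0 w)
  refine eq_of_contracting (F := fun h => W (h + 1)) (G := fun h => qSeries * W h)
    (fun n ih h => ?_) h
  have hzero : mSeries = 1 + X * (mSeries + W 1) := wordSeries_walk_zero
  have hsucc : W (h + 1) = X * (W (h + 1) + W (h + 2) + W h) := wordSeries_walk_succ h
  have hsub : W (h + 1) - qSeries * W h = X * ((W (h + 1) - qSeries * W h) +
      (W (h + 2) - qSeries * W (h + 1)) + qSeries * (W (h + 1) - qSeries * W h) -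
      X * W h * (W 1 - qSeries * W 0)) := by
    have hW0 : W 0 = mSeries := rfl
    rw [hW0, qSeries]
    linear_combination hsucc - X * W h * hzero
  have hdvd h : X ^ n ∣ W (h + 1) - qSeries * W h := ih h
  rw [hsub, pow_succ']
  exact mul_dvd_mul_left X <| dvd_sub (dvd_add (dvd_add (hdvd h) (hdvd (h + 1)))
    ((hdvd h).mul_left _)) ((hdvd 0).mul_left _)

theorem wordSeries_walk_to_zero (h : ℕ) :
    wordSeries (fun w => ind (Walk h 0 w)) = mSeries * qSeries ^ h := by
  induction h with
  | zero => simp [mSeries]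
  | succ h ih => rw [wordSeries_walk_first_passage, ih]; ring

theorem wordSeries_walk_from_zero (h : ℕ) :
    wordSeries (fun w => ind (Walk 0 h w)) = mSeries * qSeries ^ h := by
  rw [← wordSeries_walk_to_zero, ← wordSeries_mirror]
  simp only [walk_mirror]

theorem mSeries_eq : mSeries = 1 + X * mSeries + X ^ 2 * mSeries ^ 2 := by
  conv_lhs => rw [mSeries, wordSeries_walk_zero, wordSeries_walk_to_zero, qSeries]
  ring

theorem qSeries_eq : qSeries = X * (1 + qSeries + qSeries ^ 2) := by
  unfold qSeries
  linear_combination X * mSeries_eq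

/-- The series `c = 1 / (1 - X - 2 X q)`. The lowest heights that the
steps of `w` can join in whatever order they come are `numDown w` and `numUp w`, and the pairs of
walks from `0` to the one and from the other to `0` are counted by
`m ^ 2 * q ^ (numDown w + numUp w)`. -/
noncomputable def cSeries : ℤ⟦X⟧ := wordSeries fun w => qSeries ^ (numDown w + numUp w)

theorem cSeries_eq : cSeries = 1 + X * ((1 + 2 * qSeries) * cSeries) := by
  conv_lhs => rw [cSeries, wordSeries_step]
  have hshift (k : ℕ) : qSeries ^ (k + 1) = qSeries * qSeries ^ k := pow_succ' _ _
  simp only [numDown_nil, numUp_nil, numDown_none, numUp_none, numDown_up, numUp_up, numDown_down,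
    numUp_down, add_right_comm _ 1, ← add_assoc, hshift, wordSeries_mul_left]
  rw [← cSeries]
  ring

theorem cSeries_mul_one_sub_sq : cSeries * (1 - qSeries ^ 2) = mSeries := by
  have hc := cSeries_eq
  have hm := mSeries_eq
  unfold qSeries at *
  linear_combination mSeries * hc - cSeries * hm

theorem derivative_qSeries : d⁄dX ℤ qSeries = mSeries * cSeries := by
  have h := congrArg (d⁄dX ℤ) qSeries_eq
  have hq : qSeries = X * mSeries := rfl
  simp only [pow_two, Derivation.leibniz, map_add, smul_eq_mul, derivative_X,
    Derivation.map_one_eq_zero, mul_one, zero_add] at h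
  linear_combination -(d⁄dX ℤ qSeries) * cSeries_eq + cSeries * h - cSeries * mSeries_eq +
    cSeries * (1 + qSeries + X * mSeries) * hq

end MotzkinSeries

section Gap

/-- The distance from the `k`-th to the `(k+1)`-st occurrence of `true` in `l`, with virtual
occurrences just before and just after the word (and `0` if there are fewer than `k`). -/
def gap : ℕ → List Bool → ℕ
  | 0, [] => 1
  | 0, true :: _ => 1
  | 0, false :: l => gap 0 l + 1
  | _ + 1, [] => 0
  | k + 1, true :: l => gap k l
  | k + 1, false :: l => gap (k + 1) l

@[simp] theorem gap_zero_nil : gap 0 [] = 1 := rfl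
@[simp] theorem gap_zero_true (l) : gap 0 (true :: l) = 1 := rfl
@[simp] theorem gap_zero_false (l) : gap 0 (false :: l) = gap 0 l + 1 := rfl
@[simp] theorem gap_succ_nil (k) : gap (k + 1) [] = 0 := rfl
@[simp] theorem gap_succ_true (k l) : gap (k + 1) (true :: l) = gap k l := rfl
@[simp] theorem gap_succ_false (k l) : gap (k + 1) (false :: l) = gap (k + 1) l := rfl

theorem gap_pos {k : ℕ} {l : List Bool} (h : k ≤ l.count true) : 0 < gap k l := by
  induction l generalizing k with
  | nil =>
    obtain rfl : k = 0 := by simpa using h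
    simp
  | cons x l ih => cases x <;> cases k <;> simp_all

theorem gap_append_left {k : ℕ} {l : List Bool} (hk : k ≤ l.count true) (l' : List Bool) :
    gap k (l ++ true :: l') = gap k l := by
  induction l generalizing k with
  | nil =>
    obtain rfl : k = 0 := by simpa using hk
    rfl
  | cons x l ih => cases x <;> cases k <;> simp_all

theorem gap_append_right (k : ℕ) (l l' : List Bool) :
    gap (l.count true + 1 + k) (l ++ true :: l') = gap k l' := by
  induction l with
  | nil => simp [Nat.add_comm 1 k]
  | cons x l ih =>
    cases x
    · rw [List.count_cons_of_ne (by simp), List.cons_append, ← ih, Nat.add_right_comm]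
      rfl
    · rw [List.count_cons_self, List.cons_append, ← ih, Nat.add_right_comm _ 1 1,
        Nat.add_right_comm _ 1 k, gap_succ_true]

theorem gap_append_false {k : ℕ} {l : List Bool} (hk : k ≤ l.count true) :
    gap k (l ++ [false]) = gap k l + if k = l.count true then 1 else 0 := by
  induction l generalizing k with
  | nil =>
    obtain rfl : k = 0 := by simpa using hk
    rfl
  | cons x l ih => cases x <;> cases k <;> simp_all [add_right_comm]

theorem gap_reverse {k : ℕ} {l : List Bool} (hk : k ≤ l.count true) :
    gap k l.reverse = gap (l.count true - k) l := by
  induction l generalizing k with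
  | nil =>
    obtain rfl : k = 0 := by simpa using hk
    rfl
  | cons x l ih =>
    rw [List.reverse_cons]
    cases x
    · rw [List.count_cons_of_ne (by simp)] at hk ⊢
      rw [gap_append_false (by simpa using hk), ih hk, List.count_reverse]
      obtain rfl | h := eq_or_lt_of_le hk
      · simp
      · obtain ⟨d, hd⟩ : ∃ d, List.count true l - k = d + 1 := ⟨_, (Nat.succ_pred (by omega)).symm⟩
        simp [hd, h.ne]
    · rw [List.count_cons_self] at hk ⊢
      obtain rfl | h := eq_or_lt_of_le hk
      · simpa using gap_append_right 0 l.reverse []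
      · rw [gap_append_left (by simpa using Nat.lt_succ_iff.mp h), ih (by omega),
          Nat.succ_sub (by omega), gap_succ_true]

theorem wordSeries_walk_gap_zero (h r : ℕ) :
    wordSeries (fun w => ind (Walk h 0 w ∧ gap 0 (downs w) = r + 1)) =
      (X + X * qSeries) ^ r * qSeries ^ h := by
  induction r generalizing h with
  | zero =>
    have hpos (w) : gap 0 (downs w) ≠ 0 := (gap_pos (Nat.zero_le _)).ne'
    rw [wordSeries_step]
    cases h with
    | zero => simp [hpos]
    | succ h =>
      simp only [walk_nil, walk_none, walk_up, walk_succ_down, downs_none, downs_up, downs_down,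
        gap_zero_false, gap_zero_true, zero_add, add_eq_right, Nat.add_eq_zero_iff, one_ne_zero,
        and_false, false_and, and_true, hpos, ind_false, wordSeries_zero, wordSeries_walk_to_zero]
      rw [pow_succ', qSeries]
      ring
  | succ r ih =>
    rw [wordSeries_step]
    cases h
    all_goals
      simp only [walk_none, walk_up, downs_none, downs_up, downs_down, gap_zero_false,
        Nat.add_right_cancel_iff, ih]
      simp
      ring

theorem wordSeries_walk_gap {h k : ℕ} (hk : k ≤ h) (r : ℕ) :
    wordSeries (fun w => ind (Walk h 0 w ∧ gap k (downs w) = r + 1)) =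
      (X + X * qSeries) ^ r * qSeries ^ h := by
  induction k generalizing h with
  | zero => exact wordSeries_walk_gap_zero h r
  | succ k ih =>
    obtain ⟨s, rfl⟩ := Nat.exists_eq_add_of_le hk
    clear hk
    refine eq_of_contracting
      (F := fun s => wordSeries fun w => ind (Walk (k + 1 + s) 0 w ∧ gap (k + 1) (downs w) = r + 1))
      (G := fun s => (X + X * qSeries) ^ r * qSeries ^ (k + 1 + s)) (fun n hn s => ?_) s
    have hstep : wordSeries
        (fun w => ind (Walk (k + 1 + s) 0 w ∧ gap (k + 1) (downs w) = r + 1)) = X *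
          (wordSeries (fun w => ind (Walk (k + 1 + s) 0 w ∧ gap (k + 1) (downs w) = r + 1)) +
          wordSeries (fun w => ind (Walk (k + 1 + (s + 1)) 0 w ∧ gap (k + 1) (downs w) = r + 1)) +
          (X + X * qSeries) ^ r * qSeries ^ (k + s)) := by
      conv_lhs => rw [wordSeries_step]
      rw [← ih (Nat.le_add_right k s)]
      simp [add_right_comm k 1, ← add_assoc]
    have hsub : ∀ A B : ℤ⟦X⟧, A = X * (A + B + (X + X * qSeries) ^ r * qSeries ^ (k + s)) →
        A - (X + X * qSeries) ^ r * qSeries ^ (k + 1 + s) =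
          X * (A - (X + X * qSeries) ^ r * qSeries ^ (k + 1 + s) +
            (B - (X + X * qSeries) ^ r * qSeries ^ (k + 1 + (s + 1)))) := fun A B hA => by
      linear_combination hA - (X + X * qSeries) ^ r * qSeries ^ (k + s) * qSeries_eq
    rw [hsub _ _ hstep, pow_succ']
    exact mul_dvd_mul_left X (dvd_add (hn s) (hn (s + 1)))

end Gap

section InsertDown

/-- Insert a down step just before the `i`-th one (counted from `0`), or at the end of the path.
This creates a down step followed at distance `1` by the next one, or by the end of the path. -/
def insertDown : ℕ → List Step → List Step
  | _, [] => [some false]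
  | 0, some false :: w => some false :: some false :: w
  | i + 1, some false :: w => some false :: insertDown i w
  | i, x :: w => x :: insertDown i w

@[simp] theorem insertDown_nil (i) : insertDown i [] = [some false] := by cases i <;> rfl
@[simp] theorem insertDown_none (i w) : insertDown i (none :: w) = none :: insertDown i w := by
  cases i <;> rfl
@[simp] theorem insertDown_up (i w) :
    insertDown i (some true :: w) = some true :: insertDown i w := by cases i <;> rfl
@[simp] theorem insertDown_zero_down (w) :
    insertDown 0 (some false :: w) = some false :: some false :: w := rfl
@[simp] theorem insertDown_succ_down (i w) :
    insertDown (i + 1) (some false :: w) = some false :: insertDown i w := rfl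

theorem walk_insertDown {i a b : ℕ} {w : List Step} (hi : i ≤ a) :
    Walk (a + 1) b (insertDown i w) ↔ Walk a b w := by
  induction w generalizing i a with
  | nil => simp
  | cons x w ih =>
    rcases x with _ | _ | _
    · simp [ih hi]
    · cases i with
      | zero => simp
      | succ i =>
        obtain ⟨a, rfl⟩ := Nat.exists_eq_add_one_of_ne_zero (by omega : a ≠ 0)
        simp [ih (Nat.le_of_succ_le_succ hi)]
    · simp [ih (Nat.le_succ_of_le hi)]

theorem gap_downs_insertDown {i k : ℕ} {w : List Step} (hk : k ≤ i) (hi : i ≤ numDown w) :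
    gap k (downs (insertDown i w)) = gap k (downs w) := by
  induction w generalizing i k with
  | nil =>
    obtain rfl : i = 0 := by simpa using hi
    obtain rfl : k = 0 := by simpa using hk
    simp
  | cons x w ih => rcases x with _ | _ | _ <;> cases i <;> cases k <;> simp_all

theorem gap_ups_insertDown {i k : ℕ} {w : List Step} (hk : k < numUp w) :
    gap k (ups (insertDown i w)) = 1 ↔ gap k (ups w) = 1 := by
  have hpos (w) : gap 0 (ups w) ≠ 0 := (gap_pos (Nat.zero_le _)).ne'
  induction w generalizing i k with
  | nil => simp at hk
  | cons x w ih => rcases x with _ | _ | _ <;> cases i <;> cases k <;> simp_all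

theorem wordSeries_gap_zero_eq_one {R : Type*} [CommRing R] (P : List Step → Prop) :
    (wordSeries fun w => ind (gap 0 (downs w) = 1 ∧ P w) : R⟦X⟧) =
      ind (P []) + X * wordSeries fun w => ind (P (some false :: w)) := by
  have hpos (w) : gap 0 (downs w) ≠ 0 := (gap_pos (Nat.zero_le _)).ne'
  rw [wordSeries_step]
  simp [hpos]

theorem wordSeries_gap_eq_one {R : Type*} [CommRing R] (i : ℕ) (P : List Step → Prop) :
    (wordSeries fun w => ind (i + 1 ≤ numDown w ∧ gap (i + 1) (downs w) = 1 ∧ P w) : R⟦X⟧) =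
      X * wordSeries fun w => ind (i ≤ numDown w ∧ P (insertDown i w)) := by
  refine eq_of_contracting
    (F := fun s : ℕ × (List Step → Prop) =>
      wordSeries fun w => ind (s.1 + 1 ≤ numDown w ∧ gap (s.1 + 1) (downs w) = 1 ∧ s.2 w))
    (G := fun s => X * wordSeries fun w => ind (s.1 ≤ numDown w ∧ s.2 (insertDown s.1 w)))
    (fun n ih s => ?_) (i, P)
  obtain ⟨i, P⟩ := s
  have ih' i P := ih (i, P)
  dsimp only at ih' ⊢
  rw [wordSeries_step, wordSeries_step fun w => ind (i ≤ numDown w ∧ P (insertDown i w)), pow_succ']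
  cases i with
  | zero =>
    have hx := dvd_add (ih' 0 fun w => P (none :: w)) (ih' 0 fun w => P (some true :: w))
    have hdown := wordSeries_gap_zero_eq_one (R := R) fun w => P (some false :: w)
    simp only [numDown_nil, downs_nil, gap_succ_nil, zero_add, numDown_none, downs_none,
      gap_succ_false, numDown_up, downs_up, numDown_down, downs_down, gap_succ_true,
      insertDown_nil, insertDown_none, insertDown_up, insertDown_zero_down, zero_le, true_and,
      Nat.le_add_left, nonpos_iff_eq_zero, one_ne_zero, false_and, ind_false, hdown] at hx ⊢
    refine (mul_dvd_mul_left X hx).trans (dvd_of_eq ?_)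
    ring
  | succ i =>
    have hx := dvd_add (dvd_add (ih' (i + 1) fun w => P (none :: w))
      (ih' (i + 1) fun w => P (some true :: w))) (ih' i fun w => P (some false :: w))
    simp only [numDown_nil, numDown_none, downs_none, gap_succ_false, numDown_up, downs_up,
      numDown_down, downs_down, gap_succ_true, insertDown_none, insertDown_up,
      insertDown_succ_down, nonpos_iff_eq_zero, Nat.add_eq_zero_iff, one_ne_zero, and_false,
      false_and, ind_false, add_le_add_iff_right] at hx ⊢
    refine (mul_dvd_mul_left X hx).trans (dvd_of_eq ?_)
    ring

theorem wordSeries_walk_gap_gap {h k l : ℕ} (hkl : k < l) (hl : l ≤ h) :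
    wordSeries (fun w => ind (Walk h 0 w ∧ gap k (downs w) = 1 ∧ gap l (downs w) = 1)) =
      X * qSeries ^ (h - 1) := by
  obtain ⟨i, rfl⟩ := Nat.exists_eq_add_one_of_ne_zero (Nat.ne_zero_of_lt hkl)
  obtain ⟨s, rfl⟩ := Nat.exists_eq_add_one_of_ne_zero (by omega : h ≠ 0)
  have hgap := wordSeries_walk_gap (h := s) (k := k) (by omega) 0
  rw [pow_zero, one_mul] at hgap
  rw [Nat.add_sub_cancel, ← hgap]
  refine Eq.trans (wordSeries_congr fun w => congrArg ind (propext ⟨?_, ?_⟩)) <|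
    (wordSeries_gap_eq_one i fun w => Walk (s + 1) 0 w ∧ gap k (downs w) = 1).trans <|
      congrArg (X * ·) (wordSeries_congr fun w => congrArg ind (propext ⟨?_, ?_⟩))
  · exact fun ⟨hw, h1, h2⟩ => ⟨by have := hw.height; omega, h2, hw, h1⟩
  · exact fun ⟨_, h2, hw, h1⟩ => ⟨hw, h1, h2⟩
  · rintro ⟨hi, hw, h1⟩
    exact ⟨(walk_insertDown (by omega)).mp hw, by rwa [gap_downs_insertDown (by omega) hi] at h1⟩
  · rintro ⟨hw, h1⟩
    have hi : i ≤ numDown w := by have := hw.height; omega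
    exact ⟨hi, (walk_insertDown (by omega)).mpr hw, by rwa [gap_downs_insertDown (by omega) hi]⟩

end InsertDown

section Sums

theorem hasSum_of_eq {M ι : Type*} [AddCommMonoid M] [TopologicalSpace M] {f g : ι → M} {a b : M}
    (hf : HasSum f a) (hfg : ∀ i, f i = g i) (hab : a = b) : HasSum g b :=
  hab ▸ funext hfg ▸ hf

theorem hasSum_nat_prod_of_succ_succ {M : Type*} [AddCommMonoid M] [TopologicalSpace M]
    [ContinuousAdd M] {f : ℕ × ℕ → M} {a : M} (hleft : ∀ i, f (i + 1, 0) = 0)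
    (hright : ∀ j, f (0, j + 1) = 0) (h : HasSum (fun p : ℕ × ℕ => f (p.1 + 1, p.2 + 1)) a) :
    HasSum f (f (0, 0) + a) := by
  let g : ℕ × ℕ → M := fun p => if p = (0, 0) then 0 else f p
  have hsucc : Function.Injective fun p : ℕ × ℕ => (p.1 + 1, p.2 + 1) := fun p p' hp => by
    simpa [Prod.ext_iff] using hp
  have hg : HasSum g a := by
    rw [← hsucc.hasSum_iff]
    · simpa [g, Function.comp_def] using h
    · rintro ⟨_ | i, _ | j⟩ hp
      exacts [if_pos rfl, by simp [g, hright], by simp [g, hleft], absurd ⟨(i, j), rfl⟩ hp]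
  convert (hasSum_ite_eq (0, 0) (f (0, 0))).add hg using 2 with p
  by_cases hp : p = (0, 0) <;> simp [g, hp]

theorem one_sub_qSeries_sq_mul : (1 - qSeries ^ 2) * (1 + X ^ 2 * d⁄dX ℤ qSeries) = 1 := by
  have hq : qSeries = X * mSeries := rfl
  rw [derivative_qSeries]
  linear_combination X ^ 2 * mSeries * cSeries_mul_one_sub_sq - (qSeries + X * mSeries) * hq

theorem hasSum_qSeries_sq_pow :
    HasSum (fun t => (qSeries ^ 2) ^ t) (1 + X ^ 2 * d⁄dX ℤ qSeries) := by
  have hconst : constantCoeff (qSeries ^ 2) = 0 := by simp [qSeries]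
  have hgeom := WithPiTopology.tsum_pow_mul_one_sub_of_constantCoeff_eq_zero hconst
  convert (WithPiTopology.summable_pow_of_constantCoeff_eq_zero hconst).hasSum using 1
  linear_combination (∑' t, (qSeries ^ 2) ^ t) * one_sub_qSeries_sq_mul -
    (1 + X ^ 2 * d⁄dX ℤ qSeries) * hgeom

theorem sum_range_sub_add_one (n : ℕ) :
    ∑ i ∈ range (n + 1), (n - i + 1) = (n + 2).choose 2 := by
  induction n with
  | zero => rfl
  | succ n ih =>
    rw [sum_range_succ', Nat.choose_succ_succ' (n + 2) 1, ← ih, Nat.choose_one_right]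
    simp
    omega

end Sums

section OneStar

theorem wordSeries_walk_gap_ups {h k : ℕ} (hk : k ≤ h) (r : ℕ) :
    wordSeries (fun w => ind (Walk 0 h w ∧ gap k (ups w).reverse = r + 1)) =
      (X + X * qSeries) ^ r * qSeries ^ h := by
  rw [← wordSeries_walk_gap hk, ← wordSeries_mirror]
  simp only [walk_mirror, ups_mirror, List.reverse_reverse]

theorem wordSeries_walk_gap_gap_ups {h k l : ℕ} (hkl : k < l) (hl : l ≤ h) :
    wordSeries (fun w => ind (Walk 0 h w ∧ gap k (ups w).reverse = 1 ∧
      gap l (ups w).reverse = 1)) = X * qSeries ^ (h - 1) := by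
  rw [← wordSeries_walk_gap_gap hkl hl, ← wordSeries_mirror]
  simp only [walk_mirror, ups_mirror, List.reverse_reverse]

/-- `OneStarAt h P Q`: the path `P ★ Q` with a star at height `h` has the gaps `1` and `3`, in some
order, before and after its star. -/
def OneStarAt (h : ℕ) (P Q : List Step) : Prop :=
  Walk 0 h P ∧ Walk h 0 Q ∧ (gap h (ups P).reverse = 1 ∧ gap h (downs Q) = 3 ∨
    gap h (ups P).reverse = 3 ∧ gap h (downs Q) = 1)

theorem OneStarAt.height_unique {h k : ℕ} {P Q : List Step} (hh : OneStarAt h P Q)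
    (hk : OneStarAt k P Q) : h = k := by
  have := hh.1.height
  have := hk.1.height
  omega

theorem wordSeries_oneStarAt (h : ℕ) :
    (wordSeries fun P => wordSeries fun Q => ind (OneStarAt h P Q)) =
      2 * (X + X * qSeries) ^ 2 * (qSeries ^ 2) ^ h := by
  have hsplit (P Q) : (ind (OneStarAt h P Q) : ℤ⟦X⟧) =
      ind (Walk 0 h P ∧ gap h (ups P).reverse = 0 + 1) *
          ind (Walk h 0 Q ∧ gap h (downs Q) = 2 + 1) +
        ind (Walk 0 h P ∧ gap h (ups P).reverse = 2 + 1) *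
          ind (Walk h 0 Q ∧ gap h (downs Q) = 0 + 1) := by
    rw [← ind_and, ← ind_and, ← ind_or (by omega)]
    refine congrArg ind (propext ?_)
    simp only [OneStarAt]
    tauto
  simp only [hsplit, wordSeries_add, wordSeries_mul_wordSeries, wordSeries_walk_gap le_rfl,
    wordSeries_walk_gap_ups le_rfl]
  ring

theorem wordSeries_oneStar :
    (wordSeries fun P => wordSeries fun Q => ind (∃ h, OneStarAt h P Q)) =
      2 * (X + X * qSeries) ^ 2 * (1 + X ^ 2 * d⁄dX ℤ qSeries) := by
  have hexists : HasSum (fun h => wordSeries fun P => wordSeries fun Q => ind (OneStarAt h P Q))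
      (wordSeries fun P => wordSeries fun Q => ind (∃ h, OneStarAt h P Q) : ℤ⟦X⟧) :=
    hasSum_wordSeries fun P => hasSum_wordSeries fun Q =>
      hasSum_ind_exists fun _ _ => OneStarAt.height_unique
  simp only [wordSeries_oneStarAt] at hexists
  exact hexists.unique (hasSum_qSeries_sq_pow.mul_left _)

end OneStar

section MiddlePart

/-- The generating function of the paths from height `a` to height `b` with fewer than `a` down
steps, which are those that never touch height `0` whatever the order of their steps. -/
noncomputable def lowSeries (a b : ℕ) : ℤ⟦X⟧ :=
  wordSeries fun w => ind (Walk a b w ∧ numDown w < a)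

/-- The generating function of the paths from height `a` to height `b` with at least `a` down steps,
the `a`-th of which has distance `1` to the next one or to the end of the path, and with the same
property for the up steps of the reversed path from `b` to `a`. -/
noncomputable def tightSeries (a b : ℕ) : ℤ⟦X⟧ :=
  wordSeries fun w => ind (Walk a b w ∧ a ≤ numDown w ∧ gap a (downs w) = 1 ∧
    gap b (ups w).reverse = 1)

theorem lowSeries_zero_left (b : ℕ) : lowSeries 0 b = 0 := by simp [lowSeries]

theorem lowSeries_zero_right (a : ℕ) : lowSeries a 0 = 0 := by
  have hnot (w) : ¬(Walk a 0 w ∧ numDown w < a) := fun ⟨hw, _⟩ => by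
    have := hw.height
    omega
  simp [lowSeries, hnot]

theorem tightSeries_zero_zero : tightSeries 0 0 = 1 := by
  have hpos (w) : gap 0 (downs w) ≠ 0 := (gap_pos (Nat.zero_le _)).ne'
  rw [tightSeries, wordSeries_step]
  simp [hpos]

theorem tightSeries_zero_succ (b : ℕ) : tightSeries 0 (b + 1) = 0 := by
  have hpos (w) : gap 0 (downs w) ≠ 0 := (gap_pos (Nat.zero_le _)).ne'
  rw [tightSeries, wordSeries_step]
  simp [hpos]

theorem tightSeries_comm (a b : ℕ) : tightSeries a b = tightSeries b a := by
  rw [tightSeries, tightSeries, ← wordSeries_mirror]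
  refine wordSeries_congr fun w => congrArg ind (propext ?_)
  rw [walk_mirror, numDown_mirror, downs_mirror, ups_mirror, List.reverse_reverse]
  refine and_congr_right fun hw => ?_
  rw [show a ≤ numUp w ↔ b ≤ numDown w by have := hw.height; omega, and_comm (a := gap a _ = 1)]

theorem numUp_insertDown (i : ℕ) (w : List Step) : numUp (insertDown i w) = numUp w := by
  induction w generalizing i with
  | nil => simp
  | cons x w ih => rcases x with _ | _ | _ <;> cases i <;> simp [ih]

theorem gap_reverse_ups_insertDown {i b : ℕ} {w : List Step} (hb : b + 1 ≤ numUp w) :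
    gap (b + 1) (ups (insertDown i w)).reverse = 1 ↔ gap (b + 1) (ups w).reverse = 1 := by
  have hcount : (ups (insertDown i w)).count true = (ups w).count true := numUp_insertDown i w
  change b + 1 ≤ (ups w).count true at hb
  rw [gap_reverse hb, gap_reverse (hcount ▸ hb), hcount]
  exact gap_ups_insertDown (show (ups w).count true - (b + 1) < (ups w).count true by omega)

/-- The prescribed down step and then the prescribed up step can be removed. -/
theorem tightSeries_succ_succ (s b : ℕ) : tightSeries (s + 1) (b + 1) =
    X ^ 2 * ((wordSeries fun w => ind (Walk s b w)) - lowSeries s b) := by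
  have hdown : tightSeries (s + 1) (b + 1) = X * wordSeries fun w =>
      ind (s ≤ numDown w ∧ Walk s (b + 1) w ∧ gap (b + 1) (ups w).reverse = 1) := by
    rw [tightSeries]
    refine Eq.trans (wordSeries_congr fun w => congrArg ind (propext ?_)) <|
      (wordSeries_gap_eq_one s fun w =>
        Walk (s + 1) (b + 1) w ∧ gap (b + 1) (ups w).reverse = 1).trans <|
        congrArg (X * ·) (wordSeries_congr fun w => congrArg ind (propext ?_))
    · tauto
    · rw [walk_insertDown le_rfl]
      refine and_congr_right fun hs => and_congr_right fun hw => gap_reverse_ups_insertDown ?_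
      have := hw.height
      omega
  have hup : (wordSeries fun w =>
      ind (s ≤ numDown w ∧ Walk s (b + 1) w ∧ gap (b + 1) (ups w).reverse = 1) : ℤ⟦X⟧) =
      X * wordSeries fun w => ind (s ≤ numDown w ∧ Walk s b w) := by
    rw [← wordSeries_mirror, ← wordSeries_mirror fun w => ind (s ≤ numDown w ∧ Walk s b w)]
    refine Eq.trans (wordSeries_congr fun w => congrArg ind (propext ?_)) <|
      (wordSeries_gap_eq_one b fun w => Walk (b + 1) s w).trans <|
        congrArg (X * ·) (wordSeries_congr fun w => congrArg ind (propext ?_))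
    · rw [walk_mirror, numDown_mirror, ups_mirror, List.reverse_reverse]
      constructor
      · exact fun ⟨_, hw, h2⟩ => ⟨by have := hw.height; omega, h2, hw⟩
      · exact fun ⟨_, h2, hw⟩ => ⟨by have := hw.height; omega, hw, h2⟩
    · rw [walk_mirror, numDown_mirror, walk_insertDown le_rfl]
      refine and_congr_left fun hw => ?_
      have := hw.height
      omega
  have hsplit : (wordSeries fun w => ind (Walk s b w)) =
      (wordSeries fun w => ind (s ≤ numDown w ∧ Walk s b w)) + lowSeries s b := by
    rw [lowSeries, ← wordSeries_add]
    refine wordSeries_congr fun w => ?_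
    rw [← ind_or (by omega)]
    exact congrArg ind (propext (by rw [and_comm, ← and_or_left]; simp [le_or_gt]))
  rw [hdown, hup, hsplit]
  ring

/-- The heights `a + 1` and `b + 1` that a low path `w` may join are those with
`(a, b) = (numDown w + t, numUp w + t)`. -/
theorem hasSum_lowSeries : HasSum
    (fun p : ℕ × ℕ => qSeries ^ (p.1 + p.2) * lowSeries (p.1 + 1) (p.2 + 1))
    (cSeries * (1 + X ^ 2 * d⁄dX ℤ qSeries)) := by
  simp only [lowSeries, cSeries, ← wordSeries_mul_left, ← wordSeries_mul_right]
  refine hasSum_wordSeries fun w => ?_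
  have hinj : Function.Injective fun t => (numDown w + t, numUp w + t) := fun t t' ht => by
    simpa using ht
  rw [← hinj.hasSum_iff]
  · refine hasSum_of_eq (hasSum_qSeries_sq_pow.mul_left (qSeries ^ (numDown w + numUp w)))
      (fun t => ?_) rfl
    have hwalk : Walk (numDown w + t + 1) (numUp w + t + 1) w ∧ numDown w < numDown w + t + 1 :=
      ⟨(walk_of_numDown_le (by omega)).mpr (by omega), by omega⟩
    rw [Function.comp_apply, ind_of_pos hwalk]
    ring
  · rintro ⟨a, b⟩ hp
    rw [ind_of_neg, mul_zero]
    rintro ⟨hw, hlt⟩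
    have := hw.height
    exact hp ⟨a - numDown w, by ext <;> simp <;> omega⟩

end MiddlePart

section TwoStars

/-- `TwoStarsAt h k P R Q`: the path `P ★ R ★ Q` with stars at heights `h` and `k` has all four
gaps at its stars equal to `1`. -/
def TwoStarsAt (h k : ℕ) (P R Q : List Step) : Prop :=
  (Walk 0 h P ∧ Walk h k R ∧ Walk k 0 Q) ∧
    gap h (ups P).reverse = 1 ∧ gap h (downs R ++ true :: downs Q) = 1 ∧
    gap k ((ups R).reverse ++ true :: (ups P).reverse) = 1 ∧ gap k (downs Q) = 1

theorem TwoStarsAt.heights_unique {p p' : ℕ × ℕ} {P R Q : List Step}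
    (h : TwoStarsAt p.1 p.2 P R Q) (h' : TwoStarsAt p'.1 p'.2 P R Q) : p = p' := by
  obtain ⟨⟨hP, -, hQ⟩, -⟩ := h
  obtain ⟨⟨hP', -, hQ'⟩, -⟩ := h'
  have := hP.height
  have := hP'.height
  have := hQ.height
  have := hQ'.height
  ext <;> omega

theorem ind_twoStarsAt_of_le {h k : ℕ} {R : List Step} (hR : h ≤ numDown R) (P Q : List Step) :
    (ind (TwoStarsAt h k P R Q) : ℤ⟦X⟧) = ind (Walk h k R ∧ h ≤ numDown R ∧ gap h (downs R) = 1 ∧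
        gap k (ups R).reverse = 1) *
      (ind (Walk 0 h P ∧ gap h (ups P).reverse = 0 + 1) *
        ind (Walk k 0 Q ∧ gap k (downs Q) = 0 + 1)) := by
  rw [← ind_and, ← ind_and]
  refine congrArg ind (propext ?_)
  by_cases hw : Walk h k R
  · have hk : k ≤ (ups R).reverse.count true := by
      have := hw.height
      rw [List.count_reverse]
      change k ≤ numUp R
      omega
    rw [TwoStarsAt, gap_append_left hR, gap_append_left hk]
    tauto
  · simp [TwoStarsAt, hw]

theorem ind_twoStarsAt_of_lt {h k : ℕ} {R : List Step} (hR : numDown R < h) (P Q : List Step) :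
    (ind (TwoStarsAt h k P R Q) : ℤ⟦X⟧) = ind (Walk h k R ∧ numDown R < h) *
      (ind (Walk 0 h P ∧ gap (k - numUp R - 1) (ups P).reverse = 1 ∧ gap h (ups P).reverse = 1) *
        ind (Walk k 0 Q ∧ gap (h - numDown R - 1) (downs Q) = 1 ∧ gap k (downs Q) = 1)) := by
  rw [← ind_and, ← ind_and]
  refine congrArg ind (propext ?_)
  by_cases hw : Walk h k R
  · have hheight := hw.height
    have hdown : gap h (downs R ++ true :: downs Q) = gap (h - numDown R - 1) (downs Q) := by
      have hsplit : h = (downs R).count true + 1 + (h - numDown R - 1) := by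
        change h = numDown R + 1 + _
        omega
      conv_lhs => rw [hsplit, gap_append_right]
    have hup : gap k ((ups R).reverse ++ true :: (ups P).reverse) =
        gap (k - numUp R - 1) (ups P).reverse := by
      have hsplit : k = (ups R).reverse.count true + 1 + (k - numUp R - 1) := by
        rw [List.count_reverse]
        change k = numUp R + 1 + _
        omega
      conv_lhs => rw [hsplit, gap_append_right]
    rw [TwoStarsAt, hdown, hup]
    tauto
  · simp [TwoStarsAt, hw]

theorem wordSeries_twoStarsAt (h k : ℕ) :
    (wordSeries fun P => wordSeries fun R => wordSeries fun Q => ind (TwoStarsAt h k P R Q)) =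
      qSeries ^ (h + k) * tightSeries h k +
        X ^ 2 * qSeries ^ (h - 1 + (k - 1)) * lowSeries h k := by
  have hfiber (R) : (wordSeries fun P => wordSeries fun Q => ind (TwoStarsAt h k P R Q)) =
      qSeries ^ (h + k) * ind (Walk h k R ∧ h ≤ numDown R ∧ gap h (downs R) = 1 ∧
        gap k (ups R).reverse = 1) +
      X ^ 2 * qSeries ^ (h - 1 + (k - 1)) * ind (Walk h k R ∧ numDown R < h) := by
    rcases le_or_gt h (numDown R) with hR | hR
    · simp only [ind_twoStarsAt_of_le hR, wordSeries_mul_left, wordSeries_mul_right,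
        wordSeries_walk_gap le_rfl, wordSeries_walk_gap_ups le_rfl]
      simp [hR.not_gt]
      ring
    · by_cases hw : Walk h k R ∧ numDown R < h
      · have := hw.1.height
        simp only [ind_twoStarsAt_of_lt hR, wordSeries_mul_left, wordSeries_mul_right,
          wordSeries_walk_gap_gap (show h - numDown R - 1 < k by omega) le_rfl,
          wordSeries_walk_gap_gap_ups (show k - numUp R - 1 < h by omega) le_rfl]
        simp [hR.not_ge]
        ring
      · simp [ind_twoStarsAt_of_lt hR, hw, hR.not_ge]
  rw [tightSeries, lowSeries, ← wordSeries_mul_left, ← wordSeries_mul_left, ← wordSeries_add,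
    ← wordSeries_congr hfiber, wordSeries_comm]

/-- The generating function of the triples of paths whose concatenation is a Motzkin path. -/
noncomputable def tripleSeries : ℤ⟦X⟧ :=
  wordSeries fun P => wordSeries fun R => wordSeries fun Q => ind (Walk 0 0 (P ++ (R ++ Q)))

theorem hasSum_tripleSeries : HasSum (fun p : ℕ × ℕ => (mSeries * qSeries ^ p.1) *
    (wordSeries fun w => ind (Walk p.1 p.2 w)) * (mSeries * qSeries ^ p.2)) tripleSeries := by
  have hprod (a b : ℕ) : (mSeries * qSeries ^ a) * (wordSeries fun w => ind (Walk a b w)) *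
      (mSeries * qSeries ^ b) = wordSeries fun P => wordSeries fun R => wordSeries fun Q =>
        ind (Walk 0 a P ∧ Walk a b R ∧ Walk b 0 Q) := by
    simp only [ind_and, wordSeries_mul_left, wordSeries_mul_right, wordSeries_walk_from_zero,
      wordSeries_walk_to_zero, mul_assoc]
  simp only [hprod]
  refine hasSum_wordSeries fun P => hasSum_wordSeries fun R => hasSum_wordSeries fun Q => ?_
  convert hasSum_ind_exists (R := ℤ)
    (P := fun p : ℕ × ℕ => Walk 0 p.1 P ∧ Walk p.1 p.2 R ∧ Walk p.2 0 Q) ?_ using 2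
  · simp [walk_append]
  · rintro ⟨a, b⟩ ⟨a', b'⟩ ⟨hP, -, hQ⟩ ⟨hP', -, hQ'⟩
    have := hP.height
    have := hP'.height
    have := hQ.height
    have := hQ'.height
    simp only at *
    ext <;> omega

theorem coeff_tripleSeries (k : ℕ) : coeff k tripleSeries = ((k + 2).choose 2 : ℤ) * motzkin k := by
  have hcut (P : List Step) : (wordSeries fun R => wordSeries fun Q =>
      ind (Walk 0 0 (P ++ (R ++ Q))) : ℤ⟦X⟧) =
      wordSeries fun w => ((w.length + 1 : ℕ) : ℤ⟦X⟧) * ind (Walk 0 0 (P ++ w)) := by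
    rw [wordSeries_append fun R Q => ind (Walk 0 0 (P ++ (R ++ Q)))]
    simp
  have htriple : tripleSeries =
      wordSeries fun w => (((w.length + 2).choose 2 : ℕ) : ℤ⟦X⟧) * ind (Walk 0 0 w) := by
    rw [tripleSeries, wordSeries_congr hcut,
      wordSeries_append fun P w => ((w.length + 1 : ℕ) : ℤ⟦X⟧) * ind (Walk 0 0 (P ++ w))]
    refine wordSeries_congr fun w => ?_
    simp only [List.take_append_drop, List.length_drop, ← sum_mul, ← Nat.cast_sum,
      sum_range_sub_add_one]
  rw [htriple, coeff_wordSeries_length_mul k fun n => (n + 2).choose 2, motzkin_eq_coeff, mSeries]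

theorem cSeries_mul_one_add_sq :
    cSeries * (1 + qSeries ^ 2) = mSeries + 2 * X ^ 2 * mSeries * d⁄dX ℤ qSeries := by
  have hq : qSeries = X * mSeries := rfl
  rw [derivative_qSeries]
  linear_combination cSeries_mul_one_sub_sq + 2 * cSeries * (qSeries + X * mSeries) * hq

theorem hasSum_qSeries_pow_mul_lowSeries : HasSum
    (fun p : ℕ × ℕ => qSeries ^ (p.1 + p.2) * lowSeries p.1 p.2)
    (qSeries ^ 2 * (cSeries * (1 + X ^ 2 * d⁄dX ℤ qSeries))) := by
  have hsum := hasSum_nat_prod_of_succ_succ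
    (f := fun p : ℕ × ℕ => qSeries ^ (p.1 + p.2) * lowSeries p.1 p.2)
    (fun i => by simp [lowSeries_zero_right]) (fun j => by simp [lowSeries_zero_left])
    (hasSum_of_eq (hasSum_lowSeries.mul_left (qSeries ^ 2)) (fun p => by ring) rfl)
  simpa [lowSeries_zero_left] using hsum

theorem hasSum_twoStarsAt : HasSum
    (fun p : ℕ × ℕ => qSeries ^ (p.1 + p.2) * tightSeries p.1 p.2 +
      X ^ 2 * qSeries ^ (p.1 - 1 + (p.2 - 1)) * lowSeries p.1 p.2)
    (1 + X ^ 4 * tripleSeries +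
      X ^ 2 * (mSeries + 2 * X ^ 2 * mSeries * d⁄dX ℤ qSeries)) := by
  have hq : qSeries = X * mSeries := rfl
  have hsucc := hasSum_of_eq (((hasSum_tripleSeries.mul_left (X ^ 4)).sub
      (hasSum_qSeries_pow_mul_lowSeries.mul_left (X ^ 2 * qSeries ^ 2))).add
        (hasSum_lowSeries.mul_left (X ^ 2)))
    (g := fun p : ℕ × ℕ => qSeries ^ (p.1 + 1 + (p.2 + 1)) * tightSeries (p.1 + 1) (p.2 + 1) +
        X ^ 2 * qSeries ^ (p.1 + 1 - 1 + (p.2 + 1 - 1)) * lowSeries (p.1 + 1) (p.2 + 1))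
    (b := X ^ 4 * tripleSeries + X ^ 2 * (mSeries + 2 * X ^ 2 * mSeries * d⁄dX ℤ qSeries))
    (fun p => by
      rw [tightSeries_succ_succ, Nat.add_sub_cancel, Nat.add_sub_cancel]
      linear_combination -(qSeries + X * mSeries) * X ^ 2 * qSeries ^ (p.1 + p.2) *
        (wordSeries fun w => ind (Walk p.1 p.2 w)) * hq)
    (by linear_combination X ^ 2 * cSeries * (1 + qSeries ^ 2) * one_sub_qSeries_sq_mul +
          X ^ 2 * cSeries_mul_one_add_sq)
  have hsum := hasSum_nat_prod_of_succ_succ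
    (f := fun p : ℕ × ℕ => qSeries ^ (p.1 + p.2) * tightSeries p.1 p.2 +
      X ^ 2 * qSeries ^ (p.1 - 1 + (p.2 - 1)) * lowSeries p.1 p.2)
    (fun i => by simp [lowSeries_zero_right, tightSeries_comm _ 0, tightSeries_zero_succ])
    (fun j => by simp [lowSeries_zero_left, tightSeries_zero_succ]) hsucc
  simpa [lowSeries_zero_left, tightSeries_zero_zero, add_assoc] using hsum

theorem wordSeries_twoStars :
    (wordSeries fun P => wordSeries fun R => wordSeries fun Q =>
      ind (∃ p : ℕ × ℕ, TwoStarsAt p.1 p.2 P R Q)) =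
    1 + X ^ 4 * tripleSeries + X ^ 2 * (mSeries + 2 * X ^ 2 * mSeries * d⁄dX ℤ qSeries) := by
  have hexists : HasSum (fun p : ℕ × ℕ => wordSeries fun P => wordSeries fun R =>
      wordSeries fun Q => ind (TwoStarsAt p.1 p.2 P R Q)) (wordSeries fun P => wordSeries fun R =>
        wordSeries fun Q => ind (∃ p : ℕ × ℕ, TwoStarsAt p.1 p.2 P R Q) : ℤ⟦X⟧) :=
    hasSum_wordSeries fun P => hasSum_wordSeries fun R => hasSum_wordSeries fun Q =>
      hasSum_ind_exists fun _ _ => TwoStarsAt.heights_unique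
  simp only [wordSeries_twoStarsAt] at hexists
  exact hexists.unique hasSum_twoStarsAt

end TwoStars

section GapsOfWords

theorem upIdxs_true (w : List Bool) : upIdxs (true :: w) = 0 :: (upIdxs w).map (· + 1) := by
  simp only [upIdxs, List.findIdxs_cons]
  rw [List.findIdxs_start]
  rfl

theorem upIdxs_false (w : List Bool) : upIdxs (false :: w) = (upIdxs w).map (· + 1) := by
  simp only [upIdxs, List.findIdxs_cons]
  rw [List.findIdxs_start]
  rfl

theorem getD_map_upIdxs {w : List Bool} {i : ℕ} (hi : i < w.count true) :
    ((upIdxs w).map (· + 1)).getD i 0 = (upIdxs w).getD i 0 + 1 := by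
  have hlength : i < (upIdxs w).length := by simpa [upIdxs, List.count] using hi
  simp [List.getD, hlength]

theorem count_take_upIdxs {w : List Bool} (hw : 0 < w.count true) :
    (w.take ((upIdxs w).getD 0 0)).count false + 1 = gap 0 w := by
  induction w with
  | nil => simp at hw
  | cons x w ih =>
    cases x
    · have hw' : 0 < w.count true := by simpa using hw
      rw [upIdxs_false, getD_map_upIdxs hw', gap_zero_false, ← ih hw']
      simp
    · simp [upIdxs_true]

theorem rStat_add_one {w : List Bool} {i : ℕ} (hi : i + 1 < w.count true) :
    rStat w (i + 1) + 1 = gap (i + 1) w := by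
  induction w generalizing i with
  | nil => simp at hi
  | cons x w ih =>
    cases x
    · have hi' : i + 1 < w.count true := by simpa using hi
      rw [gap_succ_false, ← ih hi', rStat, upIdxs_false, getD_map_upIdxs hi', Nat.add_sub_cancel,
        getD_map_upIdxs (by omega)]
      simp [rStat]
    · have hi' : i < w.count true := by simpa using hi
      rw [gap_succ_true, rStat, upIdxs_true, List.getD_cons_succ, getD_map_upIdxs hi',
        Nat.add_sub_cancel]
      cases i with
      | zero =>
        rw [← count_take_upIdxs hi']
        simp
      | succ i =>
        rw [← ih hi', List.getD_cons_succ, getD_map_upIdxs (by omega)]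
        simp [rStat]

theorem sStat_eq_rStat (w : List Bool) (i : ℕ) : sStat w i = rStat (w.map not) i := by
  have hidx : upIdxs (w.map not) = downIdxs w := by
    rw [upIdxs, downIdxs, List.findIdxs_map]
    congr 1
    funext x
    cases x <;> rfl
  rw [rStat, sStat, hidx, ← List.map_take, ← List.map_drop]
  exact (List.count_map_of_injective _ not Bool.not_injective true).symm

end GapsOfWords

section Records

/-- For each occurrence of `c` in `w`, whether it ends its block of consecutive `c`'s. -/
def record (c : Bool) : List Bool → List Bool
  | [] => []
  | x :: w => if x = c then decide (w.head? ≠ some c) :: record c w else record c w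

/-- The word that starts with the letter `s` and has the records `A` for the letter `true` and
`B` for the letter `false`. -/
def ofRecords : Bool → List Bool → List Bool → List Bool
  | true, [], _ => []
  | true, a :: A, B => true :: ofRecords (!a) A B
  | false, _, [] => []
  | false, A, b :: B => false :: ofRecords b A B
termination_by _ A B => A.length + B.length

@[simp] theorem ofRecords_true_nil (B) : ofRecords true [] B = [] := by rw [ofRecords]

@[simp] theorem ofRecords_true_cons (a A B) :
    ofRecords true (a :: A) B = true :: ofRecords (!a) A B := by rw [ofRecords]

@[simp] theorem ofRecords_false_nil (A) : ofRecords false A [] = [] := by cases A <;> rw [ofRecords]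

@[simp] theorem ofRecords_false_cons (A b B) :
    ofRecords false A (b :: B) = false :: ofRecords b A B := by cases A <;> rw [ofRecords]

theorem length_record (c : Bool) (w : List Bool) : (record c w).length = w.count c := by
  induction w with
  | nil => rfl
  | cons x w ih => by_cases hx : x = c <;> simp [record, hx, ih]

theorem ofRecords_record (x : Bool) (w : List Bool) :
    ofRecords x (record true (x :: w)) (record false (x :: w)) = x :: w := by
  induction w generalizing x with
  | nil => cases x <;> simp [record]
  | cons y w ih =>
    have := ih y
    cases x <;> cases y <;> simp_all [record]

theorem getLastD_cons_eq_true {a : Bool} {l : List Bool} :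
    (a :: l).getLastD true = true ↔ (l = [] → a = true) ∧ l.getLastD true = true := by
  cases l <;> simp

theorem getLastD_record (c : Bool) (w : List Bool) : (record c w).getLastD true = true := by
  induction w with
  | nil => rfl
  | cons x w ih =>
    by_cases hx : x = c
    · rw [record, if_pos hx, getLastD_cons_eq_true]
      refine ⟨fun hnil => ?_, ih⟩
      cases w with
      | nil => rfl
      | cons y w => by_cases hy : y = c <;> simp_all [record]
    · rwa [record, if_neg hx]

/-- The records of the words that start with `s` and end with `false`, together with the pair of
empty records for `s = true`. -/
structure IsRecordPair (s : Bool) (A B : List Bool) : Prop where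
  left_last : A.getLastD true = true
  right_last : B.getLastD true = true
  count_eq : B.count true = A.count true + (!s).toNat

theorem eq_nil_of_count_eq_zero {l : List Bool} (hlast : l.getLastD true = true)
    (hcount : l.count true = 0) : l = [] := by
  induction l with
  | nil => rfl
  | cons a l ih =>
    rw [getLastD_cons_eq_true] at hlast
    cases a <;> simp_all

theorem IsRecordPair.induction {C : ∀ s A B, IsRecordPair s A B → Prop}
    (nil : ∀ h, C true [] [] h)
    (up : ∀ a A B h (hnext : IsRecordPair (!a) A B), C (!a) A B hnext → C true (a :: A) B h)
    (down : ∀ b A B h (hnext : IsRecordPair b A B), C b A B hnext → C false A (b :: B) h)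
    {s : Bool} {A B : List Bool} (h : IsRecordPair s A B) : C s A B h := by
  induction s, A, B using ofRecords.induct with
  | case1 B =>
    obtain rfl := eq_nil_of_count_eq_zero h.right_last (by simpa using h.count_eq)
    exact nil _
  | case2 a A B ih =>
    have hcount := h.count_eq
    have hnext : IsRecordPair (!a) A B :=
      ⟨(getLastD_cons_eq_true.mp h.left_last).2, h.right_last, by cases a <;> simpa using hcount⟩
    exact up a A B h hnext (ih hnext)
  | case3 A => simpa using h.count_eq
  | case4 A b B ih =>
    have hcount := h.count_eq
    have hnext : IsRecordPair b A B :=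
      ⟨h.left_last, (getLastD_cons_eq_true.mp h.right_last).2, by cases b <;> simpa using hcount⟩
    exact down b A B h hnext (ih hnext)

theorem IsRecordPair.record_ofRecords {s : Bool} {A B : List Bool} (h : IsRecordPair s A B) :
    record true (ofRecords s A B) = A ∧ record false (ofRecords s A B) = B := by
  suffices hhead : (ofRecords s A B).head?.getD true = s ∧
      record true (ofRecords s A B) = A ∧ record false (ofRecords s A B) = B from hhead.2
  induction h using IsRecordPair.induction with
  | nil => simp [record]
  | up a A B h hnext ih =>
    have hlast := (getLastD_cons_eq_true.mp h.left_last).1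
    rw [ofRecords_true_cons]
    generalize ofRecords (!a) A B = w at ih ⊢
    rcases w with _ | ⟨_ | _, w⟩ <;> cases a <;> simp_all [record]
  | down b A B h hnext ih =>
    rw [ofRecords_false_cons]
    generalize ofRecords b A B = w at ih ⊢
    rcases w with _ | ⟨_ | _, w⟩ <;> cases b <;> simp_all [record]

theorem isRecordPair_record {x : Bool} {w : List Bool} (hlast : (x :: w).getLast? = some false) :
    IsRecordPair x (record true (x :: w)) (record false (x :: w)) := by
  refine ⟨getLastD_record _ _, getLastD_record _ _, ?_⟩
  induction w generalizing x with
  | nil => simp_all [record]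
  | cons y w ih =>
    have := ih (x := y) (by simpa using hlast)
    cases x <;> cases y <;> simp_all [record]

theorem map_not_ofRecords (s : Bool) (A B : List Bool) :
    (ofRecords s A B).map not = ofRecords (!s) B A := by
  induction s, A, B using ofRecords.induct <;> simp_all

theorem gap_zero_ofRecords_true (A B : List Bool) : gap 0 (ofRecords true A B) = 1 := by
  cases A <;> simp

theorem gap_zero_ofRecords_false (A : List Bool) {B : List Bool} (hB : 0 < B.count true) :
    gap 0 (ofRecords false A B) = gap 0 B + 1 := by
  induction B with
  | nil => simp at hB
  | cons b B ih => cases b <;> simp_all [gap_zero_ofRecords_true]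

theorem gap_ofRecords {s : Bool} {A B : List Bool} {i : ℕ} (hi : i < A.length)
    (hcount : (A.take (i + 1)).count true + (!s).toNat ≤ B.count true) :
    gap (i + 1) (ofRecords s A B) =
      if A.getD i false then gap ((A.take i).count true + (!s).toNat) B + 1 else 1 := by
  induction s, A, B using ofRecords.induct generalizing i with
  | case1 B => simp at hi
  | case2 a A B ih =>
    cases i with
    | zero =>
      cases a
      · simp [gap_zero_ofRecords_true]
      · have : 0 < B.count true := by simpa [Nat.lt_iff_add_one_le] using hcount
        simp [gap_zero_ofRecords_false A this]
    | succ i => cases a <;> simp_all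
  | case3 A => simp at hcount
  | case4 A b B ih => cases b <;> simp_all

theorem IsRecordPair.walk_ofRecords {s : Bool} {A B : List Bool} (hAB : IsRecordPair s A B)
    {h : ℕ} :
    Walk h 0 ((ofRecords s A B).map some) ↔ h + A.length = B.length ∧
      ∀ j, (B.drop (h + j)).count true ≤ (A.drop j).count true := by
  induction hAB using IsRecordPair.induction generalizing h with
  | nil => simp
  | up a A B hAB _ ih =>
    have hzero : (B.drop h).count true ≤ (a :: A).count true := by
      simpa [hAB.count_eq] using (List.drop_sublist h B).count_le true
    have hsucc : (∀ j, (B.drop (h + j)).count true ≤ ((a :: A).drop j).count true) ↔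
        ∀ j, (B.drop (h + 1 + j)).count true ≤ (A.drop j).count true :=
      ⟨fun hj j => by simpa [add_assoc, add_comm 1] using hj (j + 1), fun hj j => by
        cases j with
        | zero => exact hzero
        | succ j => simpa [add_assoc, add_comm 1] using hj j⟩
    rw [hsucc, ofRecords_true_cons, List.map_cons, walk_up, ih, List.length_cons, add_assoc h,
      add_comm 1]
  | down b A B hAB _ ih =>
    cases h with
    | zero =>
      have hcount := hAB.count_eq
      simp only [ofRecords_false_cons, List.map_cons, walk_zero_down, false_iff, not_and,
        not_forall]
      exact fun _ => ⟨0, by simp [hcount]⟩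
    | succ h =>
      simp [ih, add_right_comm h 1]

end Records

section StarredWords

/-- A letter of a starred Motzkin path: a step or a star, encoded as `none`. The `i`-th letter of
the path of a Dyck word `w` records whether `rᵢ > 0` (a down step or a star) and whether `sᵢ > 0`
(an up step or a star). -/
abbrev Letter := Option Step

/-- The positions of down steps and stars, as a mask. -/
def peaks (W : List Letter) : List Bool := W.map (Option.all (· == some false))

/-- The positions of up steps and stars, as a mask. -/
def valleys (W : List Letter) : List Bool := W.map (Option.all (· == some true))

/-- The underlying path, in which stars are horizontal. -/
def steps (W : List Letter) : List Step := W.map Option.join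

@[simp] theorem steps_none (W) : steps (none :: W) = none :: steps W := rfl
@[simp] theorem peaks_none (W) : peaks (none :: W) = true :: peaks W := rfl
@[simp] theorem valleys_none (W) : valleys (none :: W) = true :: valleys W := rfl

@[simp] theorem steps_map_some (P : List Step) : steps (P.map some) = P := by
  simp [steps, Function.comp_def]

@[simp] theorem peaks_map_some (P : List Step) : peaks (P.map some) = downs P := by
  simp [peaks, downs]

@[simp] theorem valleys_map_some (P : List Step) : valleys (P.map some) = ups P := by
  simp [valleys, ups]

/-- The Dyck word with the given peaks and valleys; the entries added to the records say that the
last `u` is followed by a `d` and the last `d` ends the word. -/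
def toDyck (W : List Letter) : List Bool := ofRecords true (peaks W ++ [true]) (valleys W ++ [true])

theorem peaks_append (U V : List Letter) : peaks (U ++ V) = peaks U ++ peaks V := List.map_append

theorem valleys_append (U V : List Letter) : valleys (U ++ V) = valleys U ++ valleys V :=
  List.map_append

theorem steps_append (U V : List Letter) : steps (U ++ V) = steps U ++ steps V := List.map_append

theorem count_peaks (W : List Letter) :
    (peaks W).count true = numDown (steps W) + W.count none := by
  induction W with
  | nil => rfl
  | cons x W ih => rcases x with _ | _ | _ | _ <;> simp_all [peaks, steps] <;> omega

theorem count_valleys (W : List Letter) :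
    (valleys W).count true = numUp (steps W) + W.count none := by
  induction W with
  | nil => rfl
  | cons x W ih => rcases x with _ | _ | _ | _ <;> simp_all [valleys, steps] <;> omega

theorem count_valleys_of_walk {a b : ℕ} {W : List Letter} (hW : Walk a b (steps W)) :
    a + (valleys W).count true = b + (peaks W).count true := by
  have := hW.height
  rw [count_peaks, count_valleys]
  omega

theorem isRecordPair_peaks_valleys {W : List Letter}
    (hW : (valleys W).count true = (peaks W).count true) :
    IsRecordPair true (peaks W ++ [true]) (valleys W ++ [true]) :=
  ⟨by simp, by simp, by simp [hW]⟩

theorem walk_toDyck {W : List Letter} (hW : (valleys W).count true = (peaks W).count true) :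
    Walk 0 0 ((toDyck W).map some) ↔ Walk 0 0 (steps W) := by
  have hcount : numUp (steps W) = numDown (steps W) := by
    simpa [count_peaks, count_valleys] using hW
  rw [toDyck, (isRecordPair_peaks_valleys hW).walk_ofRecords, walk_zero_iff, zero_add, zero_add]
  refine and_congr (by simp [hcount, peaks, valleys]) (forall_congr' fun j => ?_)
  rcases le_or_gt j W.length with hj | hj
  · have hpeaks := count_peaks (W.drop j)
    have hvalleys := count_valleys (W.drop j)
    simp only [peaks, valleys, steps, List.map_drop] at hpeaks hvalleys ⊢
    rw [zero_add, List.drop_append_of_le_length (by simpa using hj),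
      List.drop_append_of_le_length (by simpa using hj), List.count_append, List.count_append,
      hpeaks, hvalleys]
    simp
  · rw [List.drop_eq_nil_of_le (by simp [valleys]; omega),
      List.drop_eq_nil_of_le (as := steps W) (by simp [steps]; omega)]
    simp

theorem count_toDyck {W : List Letter} (hW : (valleys W).count true = (peaks W).count true) :
    (toDyck W).count true = W.length + 1 ∧ (toDyck W).count false = W.length + 1 := by
  have hrecord := (isRecordPair_peaks_valleys hW).record_ofRecords
  rw [toDyck, ← length_record, ← length_record, hrecord.1, hrecord.2]
  simp [peaks, valleys]

theorem rStat_toDyck {W : List Letter} (hW : (valleys W).count true = (peaks W).count true)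
    {i : ℕ} (hi : i < W.length) : rStat (toDyck W) (i + 1) =
      if (peaks W).getD i false then gap (((peaks W).take i).count true) (valleys W ++ [true])
      else 0 := by
  have hlength : i < (peaks W).length := by simpa [peaks] using hi
  have hcount := (List.take_sublist (i + 1) (peaks W ++ [true])).count_le true
  refine Nat.succ_injective ((rStat_add_one (by rw [(count_toDyck hW).1]; omega)).trans ?_)
  rw [toDyck, gap_ofRecords (by simp; omega) (by simpa [hW] using hcount),
    List.getD_append _ _ _ _ hlength, List.take_append_of_le_length hlength.le]
  split <;> rfl

theorem sStat_toDyck {W : List Letter} (hW : (valleys W).count true = (peaks W).count true)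
    {i : ℕ} (hi : i < W.length) : sStat (toDyck W) (i + 1) =
      if (valleys W).getD i false then
        gap (((valleys W).take i).count true + 1) (peaks W ++ [true])
      else 0 := by
  have hlength : i < (valleys W).length := by simpa [valleys] using hi
  have hcount := (List.take_sublist (i + 1) (valleys W)).count_le true
  have hdowns : ((toDyck W).map not).count true = W.length + 1 :=
    (List.count_map_of_injective _ not Bool.not_injective false).trans (count_toDyck hW).2
  rw [sStat_eq_rStat]
  refine Nat.succ_injective ((rStat_add_one (by rw [hdowns]; omega)).trans ?_)
  rw [toDyck, map_not_ofRecords, gap_ofRecords (by simp; omega),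
    List.getD_append _ _ _ _ hlength, List.take_append_of_le_length hlength.le]
  · split <;> rfl
  · rw [List.take_append_of_le_length hlength]
    simpa [hW] using hcount

end StarredWords

section Bijection

theorem isDyckWord_iff_walk {n : ℕ} {w : List Bool} :
    IsDyckWord n w ↔ w.length = 2 * n ∧ Walk 0 0 (w.map some) := by
  have hcount (b : Bool) (w : List Bool) : (w.map some).count (some b) = w.count b :=
    List.count_map_of_injective _ some (Option.some_injective _) b
  have hprefix : (∀ p, p <+: w.map some → p.count (some false) ≤ p.count (some true)) ↔
      ∀ p, p <+: w → p.count false ≤ p.count true := by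
    refine ⟨fun h p hp => by simpa only [hcount] using h _ (hp.map some), fun h p hp => ?_⟩
    obtain ⟨q, hq, rfl⟩ := List.prefix_map_iff.mp hp
    simpa only [hcount] using h q hq
  have := w.count_true_add_count_false
  rw [IsDyckWord, walk_iff_forall_count_le, hcount, hcount]
  simp only [zero_add, hprefix]
  grind

theorem peaks_valleys_injective {W W' : List Letter} (hpeaks : peaks W = peaks W')
    (hvalleys : valleys W = valleys W') : W = W' := by
  induction W generalizing W' with
  | nil => cases W' <;> simp_all [peaks]
  | cons x W ih =>
    cases W' with
    | nil => simp [peaks] at hpeaks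
    | cons y W' =>
      simp only [peaks, valleys, List.map_cons, List.cons.injEq] at hpeaks hvalleys
      rw [ih hpeaks.2 hvalleys.2]
      rcases x with _ | _ | _ | _ <;> rcases y with _ | _ | _ | _ <;> simp_all

theorem exists_peaks_valleys {A B : List Bool} (h : A.length = B.length) :
    ∃ W, peaks W = A ∧ valleys W = B := by
  induction A generalizing B with
  | nil => exact ⟨[], rfl, (List.eq_nil_of_length_eq_zero h.symm).symm⟩
  | cons a A ih =>
    obtain _ | ⟨b, B⟩ := B
    · simp at h
    · obtain ⟨W, rfl, rfl⟩ := ih (by simpa using h)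
      cases a <;> cases b
      exacts [⟨some none :: W, rfl, rfl⟩, ⟨some (some true) :: W, rfl, rfl⟩,
        ⟨some (some false) :: W, rfl, rfl⟩, ⟨none :: W, rfl, rfl⟩]

theorem toDyck_injOn : Set.InjOn toDyck {W | Walk 0 0 (steps W)} := by
  intro W hW W' hW' heq
  have hrecord {W} (hW : Walk 0 0 (steps W)) := (isRecordPair_peaks_valleys
    (by simpa using count_valleys_of_walk hW)).record_ofRecords
  have hpeaks := (hrecord hW).1.symm.trans ((congrArg (record true) heq).trans (hrecord hW').1)
  have hvalleys := (hrecord hW).2.symm.trans ((congrArg (record false) heq).trans (hrecord hW').2)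
  exact peaks_valleys_injective (List.append_cancel_right hpeaks)
    (List.append_cancel_right hvalleys)

theorem exists_eq_append_of_getLastD {l : List Bool} (hl : l ≠ [])
    (hlast : l.getLastD true = true) : ∃ l', l = l' ++ [true] := by
  obtain rfl | ⟨l', a, rfl⟩ := l.eq_nil_or_concat'
  · exact absurd rfl hl
  · exact ⟨l', by simpa using hlast⟩

theorem getLast_of_walk {w : List Bool} (hw : Walk 0 0 (w.map some)) (hne : w ≠ []) :
    w.getLast? = some false := by
  obtain rfl | ⟨v, a, rfl⟩ := w.eq_nil_or_concat'
  · exact absurd rfl hne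
  · cases a
    · simp
    · simp [walk_append] at hw

theorem exists_toDyck_eq {n : ℕ} {w : List Bool} (hw : IsDyckWord (n + 1) w) :
    ∃ W, W.length = n ∧ Walk 0 0 (steps W) ∧ toDyck W = w := by
  have ⟨hlength, hup, hdown, _⟩ := hw
  have hwalk := (isDyckWord_iff_walk.mp hw).2
  obtain _ | ⟨x, w⟩ := w
  · simp at hlength
  obtain rfl : x = true := by cases x <;> simp_all
  have hpair := isRecordPair_record (getLast_of_walk hwalk (by simp))
  have hmake := ofRecords_record true w
  rw [← length_record] at hup hdown
  obtain ⟨A, hA⟩ := exists_eq_append_of_getLastD (List.ne_nil_of_length_eq_add_one hup)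
    hpair.left_last
  obtain ⟨B, hB⟩ := exists_eq_append_of_getLastD (List.ne_nil_of_length_eq_add_one hdown)
    hpair.right_last
  rw [hA] at hup hpair hmake
  rw [hB] at hdown hpair hmake
  obtain ⟨W, rfl, rfl⟩ := exists_peaks_valleys (A := A) (B := B) (by simp at hup hdown; omega)
  have hcount : (valleys W).count true = (peaks W).count true := by simpa using hpair.count_eq
  refine ⟨W, by simpa [peaks] using hup, ?_, hmake⟩
  rwa [← walk_toDyck hcount, toDyck, hmake]

end Bijection

section Weights

/-- The factor of `L` contributed by a star with the letters `U` before it and `V` after it. For a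
star at height `h` it only depends on the distance from the `h`-th to the `(h + 1)`-st valley before
the star and from the `h`-th to the `(h + 1)`-st peak after it. -/
def starWeight (U V : List Letter) : ℕ :=
  let h := (valleys U).count true - (peaks U).count true
  (gap h (valleys U).reverse + gap h (peaks V)).choose (gap h (valleys U).reverse)

/-- The product of the weights of the stars in the second part of a split word. -/
def weight : List Letter → List Letter → ℕ
  | _, [] => 1
  | U, none :: V => starWeight U V * weight (U ++ [none]) V
  | U, some x :: V => weight (U ++ [some x]) V

theorem weight_map_some_append (U : List Letter) (P : List Step) (V : List Letter) :
    weight U (P.map some ++ V) = weight (U ++ P.map some) V := by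
  induction P generalizing U with
  | nil => simp
  | cons x P ih => simp [weight, ih]

theorem choose_toDyck_none {U V : List Letter} (hwalk : Walk 0 0 (steps (U ++ none :: V))) :
    (rStat (toDyck (U ++ none :: V)) (U.length + 1) +
      sStat (toDyck (U ++ none :: V)) (U.length + 1)).choose
        (rStat (toDyck (U ++ none :: V)) (U.length + 1)) = starWeight U V := by
  have hW := count_valleys_of_walk hwalk
  rw [zero_add, zero_add] at hW
  obtain ⟨h, hU, hV⟩ := walk_append.mp (steps_append .. ▸ hwalk)
  have hheight := count_valleys_of_walk hU
  have hheight' := count_valleys_of_walk (W := V) (by simpa [steps] using hV)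
  have hr : rStat (toDyck (U ++ none :: V)) (U.length + 1) = gap h (valleys U).reverse := by
    rw [rStat_toDyck hW (by simp), gap_reverse (by omega),
      show (valleys U).count true - h = (peaks U).count true by omega,
      ← gap_append_left (l := valleys U) (by omega) (valleys V ++ [true])]
    simp [peaks, valleys, List.getD]
  have hs : sStat (toDyck (U ++ none :: V)) (U.length + 1) = gap h (peaks V) := by
    rw [sStat_toDyck hW (by simp), ← gap_append_left (l := peaks V) (by omega) [],
      ← gap_append_right h (peaks U),
      show (peaks U).count true + 1 + h = (valleys U).count true + 1 by omega]
    simp [peaks, valleys, List.getD]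
  rw [hr, hs, starWeight, show (valleys U).count true - (peaks U).count true = h by omega]

theorem choose_toDyck_some {U V : List Letter} {x : Step}
    (hwalk : Walk 0 0 (steps (U ++ some x :: V))) :
    (rStat (toDyck (U ++ some x :: V)) (U.length + 1) +
      sStat (toDyck (U ++ some x :: V)) (U.length + 1)).choose
        (rStat (toDyck (U ++ some x :: V)) (U.length + 1)) = 1 := by
  have hW := count_valleys_of_walk hwalk
  rw [zero_add, zero_add] at hW
  rw [rStat_toDyck hW (by simp), sStat_toDyck hW (by simp)]
  rcases x with _ | _ | _ <;> simp [peaks, valleys, List.getD]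

theorem prod_choose_toDyck {U V : List Letter} (hwalk : Walk 0 0 (steps (U ++ V))) :
    ∏ j ∈ range V.length, (rStat (toDyck (U ++ V)) (U.length + j + 1) +
      sStat (toDyck (U ++ V)) (U.length + j + 1)).choose
        (rStat (toDyck (U ++ V)) (U.length + j + 1)) = weight U V := by
  induction V generalizing U with
  | nil => rfl
  | cons x V ih =>
    have := ih (U := U ++ [x]) (by simpa using hwalk)
    simp only [List.append_assoc, List.singleton_append, List.length_append,
      List.length_singleton, add_assoc, add_comm 1] at this
    rw [List.length_cons, prod_range_succ']
    simp only [add_assoc, this]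
    cases x with
    | none => exact (congrArg _ (choose_toDyck_none hwalk)).trans (mul_comm _ _)
    | some x => exact (congrArg _ (choose_toDyck_some hwalk)).trans (mul_one _)

theorem LStat_toDyck {W : List Letter} (hwalk : Walk 0 0 (steps W)) :
    LStat (W.length + 1) (toDyck W) = weight [] W := by
  rw [← prod_choose_toDyck (U := []) hwalk, LStat, Nat.add_sub_cancel,
    ← Ico_add_one_right_eq_Icc, prod_Ico_eq_prod_range]
  simp [add_comm 1]

theorem ncard_dyckL (n k : ℕ) : (dyckL (n + 1) k).ncard =
    {W : List Letter | W.length = n ∧ Walk 0 0 (steps W) ∧ weight [] W = k}.ncard := by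
  rw [← (toDyck_injOn.mono fun W hW => hW.2.1).ncard_image]
  congr 1
  ext w
  constructor
  · rintro ⟨hw, hk⟩
    obtain ⟨W, rfl, hwalk, rfl⟩ := exists_toDyck_eq hw
    exact ⟨W, ⟨rfl, hwalk, (LStat_toDyck hwalk).symm.trans hk⟩, rfl⟩
  · rintro ⟨W, ⟨rfl, hwalk, rfl⟩, rfl⟩
    have hW : (valleys W).count true = (peaks W).count true := by
      simpa using count_valleys_of_walk hwalk
    have ⟨htrue, hfalse⟩ := count_toDyck hW
    have := (toDyck W).count_true_add_count_false
    exact ⟨isDyckWord_iff_walk.mpr ⟨by omega, (walk_toDyck hW).mpr hwalk⟩, LStat_toDyck hwalk⟩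

end Weights

section WeightFour

theorem two_le_choose {a b : ℕ} (ha : 0 < a) (hb : 0 < b) : 2 ≤ (a + b).choose a := by
  obtain ⟨a, rfl⟩ := Nat.exists_eq_add_one_of_ne_zero ha.ne'
  obtain ⟨b, rfl⟩ := Nat.exists_eq_add_one_of_ne_zero hb.ne'
  have h1 := Nat.choose_pos (n := a + (b + 1)) (k := a) (by omega)
  have h2 := Nat.choose_pos (n := a + (b + 1)) (k := a + 1) (by omega)
  rw [add_right_comm, Nat.choose_succ_succ']
  omega

theorem six_le_choose {a b : ℕ} (ha : 2 ≤ a) (hb : 2 ≤ b) : 6 ≤ (a + b).choose a := by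
  calc 6 = (2 + 2).choose 2 := rfl
    _ ≤ (a + 2).choose 2 := Nat.choose_le_choose 2 (by omega)
    _ = (a + 2).choose a := Nat.choose_symm_add.symm
    _ ≤ (a + b).choose a := Nat.choose_le_choose a (by omega)

theorem choose_eq_two_iff {a b : ℕ} (ha : 0 < a) (hb : 0 < b) :
    (a + b).choose a = 2 ↔ a = 1 ∧ b = 1 := by
  obtain rfl | ha := Nat.eq_or_lt_of_le ha
  · rw [add_comm, Nat.choose_one_right]
    omega
  obtain rfl | hb := Nat.eq_or_lt_of_le hb
  · rw [Nat.choose_succ_self_right]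
    omega
  have := six_le_choose ha hb
  omega

theorem choose_eq_four_iff {a b : ℕ} (ha : 0 < a) (hb : 0 < b) :
    (a + b).choose a = 4 ↔ a = 1 ∧ b = 3 ∨ a = 3 ∧ b = 1 := by
  obtain rfl | ha := Nat.eq_or_lt_of_le ha
  · rw [add_comm, Nat.choose_one_right]
    omega
  obtain rfl | hb := Nat.eq_or_lt_of_le hb
  · rw [Nat.choose_succ_self_right]
    omega
  have := six_le_choose ha hb
  omega

theorem mul_eq_four_iff {a b : ℕ} (ha : 2 ≤ a) (hb : 2 ≤ b) : a * b = 4 ↔ a = 2 ∧ b = 2 := by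
  refine ⟨fun h => ?_, by rintro ⟨rfl, rfl⟩; rfl⟩
  constructor <;> nlinarith

theorem starWeight_eq {U V : List Letter} {h : ℕ} (hU : Walk 0 h (steps U)) :
    starWeight U V =
      (gap h (valleys U).reverse + gap h (peaks V)).choose (gap h (valleys U).reverse) := by
  have := count_valleys_of_walk hU
  rw [starWeight, show (valleys U).count true - (peaks U).count true = h by omega]

theorem gap_valleys_pos {U : List Letter} {h : ℕ} (hU : Walk 0 h (steps U)) :
    0 < gap h (valleys U).reverse := by
  have := count_valleys_of_walk hU
  exact gap_pos (by rw [List.count_reverse]; omega)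

theorem gap_peaks_pos {V : List Letter} {h : ℕ} (hV : Walk h 0 (steps V)) :
    0 < gap h (peaks V) := by
  have := count_valleys_of_walk hV
  exact gap_pos (by omega)

theorem walk_steps_append_none {U V : List Letter} : Walk 0 0 (steps (U ++ none :: V)) ↔
    ∃ h, Walk 0 h (steps U) ∧ Walk h 0 (steps V) := by
  simp [steps_append, walk_append]

theorem two_le_starWeight {U V : List Letter} {h : ℕ} (hU : Walk 0 h (steps U))
    (hV : Walk h 0 (steps V)) : 2 ≤ starWeight U V := by
  rw [starWeight_eq hU]
  exact two_le_choose (gap_valleys_pos hU) (gap_peaks_pos hV)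

theorem starWeight_eq_two_iff {U V : List Letter} {h : ℕ} (hU : Walk 0 h (steps U))
    (hV : Walk h 0 (steps V)) :
    starWeight U V = 2 ↔ gap h (valleys U).reverse = 1 ∧ gap h (peaks V) = 1 := by
  rw [starWeight_eq hU, choose_eq_two_iff (gap_valleys_pos hU) (gap_peaks_pos hV)]

theorem starWeight_eq_four_iff {U V : List Letter} {h : ℕ} (hU : Walk 0 h (steps U))
    (hV : Walk h 0 (steps V)) :
    starWeight U V = 4 ↔ gap h (valleys U).reverse = 1 ∧ gap h (peaks V) = 3 ∨
      gap h (valleys U).reverse = 3 ∧ gap h (peaks V) = 1 := by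
  rw [starWeight_eq hU, choose_eq_four_iff (gap_valleys_pos hU) (gap_peaks_pos hV)]

theorem two_pow_le_weight {U V : List Letter} (hwalk : Walk 0 0 (steps (U ++ V))) :
    2 ^ V.count none ≤ weight U V := by
  induction V generalizing U with
  | nil => simp [weight]
  | cons x V ih =>
    have hrest := ih (U := U ++ [x]) (by simpa using hwalk)
    cases x with
    | none =>
      obtain ⟨h, hU, hV⟩ := walk_steps_append_none.mp hwalk
      rw [List.count_cons_self, pow_succ', weight]
      exact Nat.mul_le_mul (two_le_starWeight hU hV) hrest
    | some x => simpa [weight] using hrest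

theorem weight_oneStar (P Q : List Step) :
    weight [] (P.map some ++ none :: Q.map some) = starWeight (P.map some) (Q.map some) := by
  rw [weight_map_some_append, weight, ← List.append_nil (Q.map some), weight_map_some_append]
  simp [weight]

theorem weight_twoStars (P R Q : List Step) :
    weight [] (P.map some ++ none :: (R.map some ++ none :: Q.map some)) =
      starWeight (P.map some) (R.map some ++ none :: Q.map some) *
        starWeight (P.map some ++ none :: R.map some) (Q.map some) := by
  rw [weight_map_some_append, weight, weight_map_some_append, weight,
    ← List.append_nil (Q.map some), weight_map_some_append]
  simp [weight]

theorem oneStar_iff (P Q : List Step) :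
    Walk 0 0 (steps (P.map some ++ none :: Q.map some)) ∧
      weight [] (P.map some ++ none :: Q.map some) = 4 ↔ ∃ h, OneStarAt h P Q := by
  rw [walk_steps_append_none, weight_oneStar, ← exists_and_right]
  refine exists_congr fun h => ?_
  rw [OneStarAt, ← and_assoc, steps_map_some, steps_map_some, and_congr_right_iff]
  rintro ⟨hP, hQ⟩
  rw [starWeight_eq_four_iff (h := h) (by simpa) (by simpa), peaks_map_some, valleys_map_some]

theorem twoStars_iff (P R Q : List Step) :
    Walk 0 0 (steps (P.map some ++ none :: (R.map some ++ none :: Q.map some))) ∧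
      weight [] (P.map some ++ none :: (R.map some ++ none :: Q.map some)) = 4 ↔
        ∃ p : ℕ × ℕ, TwoStarsAt p.1 p.2 P R Q := by
  have hwalks : Walk 0 0 (steps (P.map some ++ none :: (R.map some ++ none :: Q.map some))) ↔
      ∃ p : ℕ × ℕ, Walk 0 p.1 P ∧ Walk p.1 p.2 R ∧ Walk p.2 0 Q := by
    simp [steps_append, walk_append, Prod.exists]
  rw [hwalks, weight_twoStars, ← exists_and_right]
  refine exists_congr fun ⟨h, k⟩ => ?_
  rw [TwoStarsAt, and_congr_right_iff]
  rintro ⟨hP, hR, hQ⟩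
  have hleft : Walk 0 h (steps (P.map some)) := by simpa
  have hleft' : Walk 0 k (steps (P.map some ++ none :: R.map some)) := by
    simpa [steps_append, walk_append] using ⟨h, hP, hR⟩
  have hright : Walk h 0 (steps (R.map some ++ none :: Q.map some)) := by
    simpa [steps_append, walk_append] using ⟨k, hR, hQ⟩
  have hright' : Walk k 0 (steps (Q.map some)) := by simpa
  rw [mul_eq_four_iff (two_le_starWeight hleft hright) (two_le_starWeight hleft' hright'),
    starWeight_eq_two_iff hleft hright, starWeight_eq_two_iff hleft' hright']
  simp [peaks_append, valleys_append, and_assoc]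

theorem weight_ne_four {W : List Letter} (hwalk : Walk 0 0 (steps W)) (hW : 3 ≤ W.count none) :
    weight [] W ≠ 4 := by
  have hpow := two_pow_le_weight (U := []) (V := W) hwalk
  have := Nat.pow_le_pow_right two_pos hW
  omega

theorem wordSeries_weight_eq_four {R : Type*} [CommRing R] :
    (wordSeries fun W => ind (Walk 0 0 (steps W) ∧ weight [] W = 4) : R⟦X⟧) =
      X * (wordSeries fun P => wordSeries fun Q => ind (∃ h, OneStarAt h P Q)) +
        X ^ 2 * wordSeries fun P => wordSeries fun R => wordSeries fun Q =>
          ind (∃ p : ℕ × ℕ, TwoStarsAt p.1 p.2 P R Q) := by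
  have hnone (P : List Step) : weight [] (P.map some) ≠ 4 := by
    rw [← List.append_nil (P.map some), weight_map_some_append]
    simp [weight]
  have hmany (P R Q : List Step) (V) : ¬(Walk 0 0 (steps (P.map some ++ none ::
      (R.map some ++ none :: (Q.map some ++ none :: V)))) ∧ weight [] (P.map some ++ none ::
      (R.map some ++ none :: (Q.map some ++ none :: V))) = 4) :=
    fun h => weight_ne_four h.1 (by simp only [List.count_append, List.count_cons_self]; omega) h.2
  rw [wordSeries_option]
  simp only [hnone, and_false, ind_false, zero_add]
  simp only [wordSeries_option fun V => ind (Walk 0 0 (steps (_ ++ none :: V)) ∧ _), oneStar_iff]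
  simp only [wordSeries_option fun V => ind (Walk 0 0 (steps (_ ++ none :: (_ ++ none :: V))) ∧ _),
    twoStars_iff, hmany, ind_false, wordSeries_zero, mul_zero, add_zero]
  simp only [wordSeries_add, wordSeries_mul_left]
  ring

end WeightFour

section Coefficients

theorem gap_zero_downs_eq_add_one_iff {k : ℕ} {w : List Step} (hw : w.length ≠ k) :
    gap 0 (downs w) = k + 1 ↔ w.getD k none = some false ∧ ∀ j < k, w.getD j none ≠ some false := by
  induction k generalizing w with
  | zero =>
    have hpos (w) : gap 0 (downs w) ≠ 0 := (gap_pos (Nat.zero_le _)).ne'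
    rcases w with _ | ⟨_ | _ | _, w⟩ <;> simp_all
  | succ k ih =>
    rw [Nat.forall_lt_succ_left]
    rcases w with _ | ⟨_ | _ | _, w⟩ <;> simp_all

theorem motzkinBallot_add_one (n k : ℕ) :
    (motzkinBallot n (k + 1) : ℤ) = coeff n ((X + X * qSeries) ^ k) := by
  rw [motzkinBallot]
  split_ifs with hn
  · obtain rfl : n = k := by omega
    rw [show X + X * qSeries = X * (1 + qSeries) by ring, mul_pow, coeff_X_pow_mul']
    simp [qSeries]
  · rw [← mul_one ((X + X * qSeries) ^ k), ← pow_zero qSeries, ← wordSeries_walk_gap_zero,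
      ← ncard_eq_coeff_wordSeries]
    congr 2
    ext w
    refine and_congr_right fun hw => ?_
    rw [isMotzkinWord_iff_walk, gap_zero_downs_eq_add_one_iff (by omega), Nat.add_sub_cancel]

theorem coeff_derivative_qSeries (n : ℕ) : coeff n (d⁄dX ℤ qSeries) = (n + 1) * motzkin n := by
  rw [coeff_derivative, qSeries, coeff_succ_X_mul, motzkin_eq_coeff, mul_comm]

theorem motzkinZ_natCast (n : ℕ) : motzkinZ n = motzkin n := by simp [motzkinZ]

theorem motzkinZ_sub (n j : ℕ) : motzkinZ (n - j) = coeff n (X ^ j * mSeries) := by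
  rw [coeff_X_pow_mul']
  split_ifs with h
  · rw [← Nat.cast_sub h, motzkinZ_natCast, motzkin_eq_coeff]
  · rw [motzkinZ, if_neg (by omega)]

theorem motzkinBallotZ_sub (n j k : ℕ) :
    motzkinBallotZ (n - j) (k + 1) = coeff n (X ^ j * (X + X * qSeries) ^ k) := by
  rw [coeff_X_pow_mul']
  split_ifs with h
  · rw [← Nat.cast_sub h, ← motzkinBallot_add_one]
    simp [motzkinBallotZ]
  · rw [motzkinBallotZ, if_neg (by omega)]

theorem sum_motzkinZ_mul {f : ℤ → ℤ} {F : ℤ⟦X⟧} (hf : ∀ k : ℕ, f k = coeff k F) (n j : ℕ) :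
    ∑ i ∈ Icc (0 : ℤ) (n - j), (i + 1) * motzkinZ i * f (n - j - i) =
      coeff n (X ^ j * (d⁄dX ℤ qSeries * F)) := by
  rw [coeff_X_pow_mul']
  split_ifs with h
  · obtain ⟨N, rfl⟩ := Nat.exists_eq_add_of_le' h
    rw [Nat.add_sub_cancel, coeff_mul, Nat.sum_antidiagonal_eq_sum_range_succ_mk, Nat.cast_add,
      add_sub_cancel_right]
    refine (sum_bij (fun (i : ℕ) _ => (i : ℤ)) (by simp) (by simp) (fun i hi => ?_)
      fun i hi => ?_).symm
    · rw [mem_Icc] at hi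
      exact ⟨i.toNat, by rw [mem_range]; omega, by omega⟩
    · rw [mem_range, Nat.lt_succ_iff] at hi
      rw [coeff_derivative_qSeries, motzkinZ_natCast, ← hf, Nat.cast_sub hi]
  · rw [Icc_eq_empty (by omega), sum_empty]

theorem sum_motzkinZ_mul_motzkinBallotZ (n : ℕ) :
    ∑ i ∈ Icc (0 : ℤ) (n - 6), (i + 1) * motzkinZ i * motzkinBallotZ (n - 4 - i) 3 =
      coeff n (X ^ 6 * (d⁄dX ℤ qSeries * (1 + qSeries) ^ 2)) := by
  have hballot (k : ℕ) : motzkinBallotZ (k + 2) 3 = coeff k ((1 + qSeries) ^ 2) := by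
    rw [← coeff_X_pow_mul _ 2 k, ← mul_pow, mul_add, mul_one]
    simpa using motzkinBallotZ_sub (k + 2) 0 2
  rw [← sum_motzkinZ_mul (f := fun k => motzkinBallotZ (k + 2) 3) hballot]
  exact sum_congr rfl fun i _ => by congr 2; push_cast; ring

theorem choose_mul_motzkinZ (n : ℕ) :
    ((n - 5).choose 2 : ℤ) * motzkinZ (n - 7) = coeff n (X ^ 7 * tripleSeries) := by
  have hmotzkin := motzkinZ_sub n 7
  push_cast at hmotzkin
  rw [hmotzkin, coeff_X_pow_mul', coeff_X_pow_mul']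
  split_ifs with h
  · rw [coeff_tripleSeries, motzkin_eq_coeff, show n - 7 + 2 = n - 5 by omega]
  · rw [mul_zero]

theorem ncard_dyckL_four (n : ℕ) : ((dyckL (n + 1) 4).ncard : ℤ) =
    coeff (n + 1) (X ^ 3) + 2 * (coeff (n + 1) (X ^ 2 * (X + X * qSeries) ^ 2) +
      coeff (n + 1) (X ^ 6 * (d⁄dX ℤ qSeries * (1 + qSeries) ^ 2))) +
      coeff (n + 1) (X ^ 7 * tripleSeries) + coeff (n + 1) (X ^ 5 * mSeries) +
      2 * coeff (n + 1) (X ^ 7 * (d⁄dX ℤ qSeries * mSeries)) := by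
  rw [ncard_dyckL, ncard_eq_coeff_wordSeries, wordSeries_weight_eq_four, wordSeries_oneStar,
    wordSeries_twoStars, ← coeff_succ_X_mul]
  simp only [two_mul, ← map_add]
  congr 1
  ring

end Coefficients

end DyckFour

/-- **Theorem (L = 4).** For `n ≥ 4`,
`|𝒟ₙ⁴| = 2·(T_{n-2,3} + Σ_{i=0}^{n-6} (i+1)·Mᵢ·T_{n-4-i,3}) + C(n-5,2)·M_{n-7} + M_{n-5}`
`+ 2·Σ_{i=0}^{n-7} (i+1)·Mᵢ·M_{n-7-i}`, with empty sums equal to `0` and terms with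
negative index equal to `0`; moreover `|𝒟₃⁴| = 1`. -/
theorem dyck_L_eq_four_count :
    (∀ n : ℕ, 4 ≤ n →
      ((dyckL n 4).ncard : ℤ) =
        2 * (motzkinBallotZ ((n : ℤ) - 2) 3 +
          ∑ i ∈ Finset.Icc (0 : ℤ) ((n : ℤ) - 6),
            (i + 1) * motzkinZ i * motzkinBallotZ ((n : ℤ) - 4 - i) 3) +
        (Nat.choose (n - 5) 2 : ℤ) * motzkinZ ((n : ℤ) - 7) + motzkinZ ((n : ℤ) - 5) +
        2 * ∑ i ∈ Finset.Icc (0 : ℤ) ((n : ℤ) - 7),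
            (i + 1) * motzkinZ i * motzkinZ ((n : ℤ) - 7 - i)) ∧
    (dyckL 3 4).ncard = 1 := by
  constructor
  · intro n hn
    have hcube : PowerSeries.coeff n (PowerSeries.X ^ 3 : PowerSeries ℤ) = 0 := by
      rw [PowerSeries.coeff_X_pow, if_neg (by omega)]
    have hballot := DyckFour.motzkinBallotZ_sub n 2 2
    have hmotzkin := DyckFour.motzkinZ_sub n 5
    have hsum := DyckFour.sum_motzkinZ_mul (f := motzkinZ)
      (fun k => (DyckFour.motzkinZ_natCast k).trans (DyckFour.motzkin_eq_coeff k)) n 7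
    obtain ⟨n, rfl⟩ := Nat.exists_eq_add_one_of_ne_zero (by omega : n ≠ 0)
    rw [DyckFour.ncard_dyckL_four, hcube, zero_add, ← hballot, ← hmotzkin, ← hsum,
      ← DyckFour.sum_motzkinZ_mul_motzkinBallotZ, ← DyckFour.choose_mul_motzkinZ]
    rfl
  · refine Nat.cast_injective (R := ℤ) ((DyckFour.ncard_dyckL_four 2).trans ?_)
    simp [← mul_one_add, mul_pow, PowerSeries.coeff_X_pow_mul', PowerSeries.coeff_X_pow]
end

section
/- For all integers r ≥ 1, s ≥ 1, and n ≥ r+s, the number of Dyck paths in D_n^{r,s} is |D_n^{r,s}| = T_{n-2, r+s-1} + Σ_{i=0}^{n-2-s-r} (i+1)·M_i·T_{n-4-i, r+s-1}, where the sum is empty when n-2-s-r < 0. -/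
/-!
Record, for each `i`, whether `rᵢ > 0` and whether `sᵢ > 0`, that is, whether the `i`-th up step and
the `i`-th down step of a Dyck path are followed by a step of the other kind. These two words
determine the path, and the condition that it stays nonnegative says that every prefix of the first
word has at most as many marks as the prefix of the second. The only index with both marks splits
them into two words over up, down and level steps; with the first one reversed, these are Motzkin
words from a common height `h` down to `0`, and `r` and `s` are the distances in them from the
`h`-th down step to the next one. With `y = x m(x)`, where `m` is the Motzkin generating function,
the words with a given distance `r` have generating function `yʰ (x (1 + y)) ^ (r - 1)`, so the
paths have `∑ₕ y²ʰ (x (1 + y)) ^ (r + s - 2)`. Here `(x (1 + y)) ^ (r + s - 2)` is the generating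
function of `T_{n, r + s - 1}`, and `∑ₕ y²ʰ = 1 / (1 - y²) = 1 + x² y'` because
`y = x (1 + y + y²)`; the coefficients of `y'` are `(i + 1) Mᵢ`.
-/

namespace DyckMotzkin

open PowerSeries

/-! ### Generating functions of words -/

section WordSeries

variable {α β : Type*}

theorem finite_setOf_length_eq_and [Finite α] (n : ℕ) (P : List α → Prop) :
    {w : List α | w.length = n ∧ P w}.Finite :=
  (List.finite_length_eq α n).subset fun _ h => h.1

/-- The generating function, by length, of the words over `α` that satisfy `P`. -/
noncomputable def wordSeries (P : List α → Prop) : ℤ⟦X⟧ :=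
  mk fun n => ({w : List α | w.length = n ∧ P w}.ncard : ℤ)

theorem coeff_wordSeries (n : ℕ) (P : List α → Prop) :
    coeff n (wordSeries P) = ({w : List α | w.length = n ∧ P w}.ncard : ℤ) :=
  coeff_mk _ _

theorem wordSeries_false : wordSeries (fun _ : List α => False) = 0 := by
  ext n
  simp [coeff_wordSeries]

theorem ncard_length_zero_and (P : List α → Prop) [Decidable (P [])] :
    {w : List α | w.length = 0 ∧ P w}.ncard = if P [] then 1 else 0 := by
  split_ifs with h
  · rw [Set.ncard_eq_one]
    exact ⟨[], by ext w; simpa using fun hw => hw ▸ h⟩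
  · rw [Set.ncard_eq_zero ((Set.finite_singleton []).subset fun w hw => by simpa using hw.1)]
    ext w
    simpa using fun hw => hw ▸ h

theorem ncard_length_succ_and [Fintype α] (n : ℕ) (P : List α → Prop) :
    {w : List α | w.length = n + 1 ∧ P w}.ncard =
      ∑ a, {w : List α | w.length = n ∧ P (a :: w)}.ncard := by
  have hcover : {w : List α | w.length = n + 1 ∧ P w} =
      ⋃ a, List.cons a '' {w | w.length = n ∧ P (a :: w)} := by
    ext (_ | ⟨a, w⟩) <;> simp
  have hdisjoint : Pairwise (Function.onFun Disjoint
      fun a => List.cons a '' {w | w.length = n ∧ P (a :: w)}) := by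
    intro a b hab
    rw [Function.onFun, Set.disjoint_left]
    rintro _ ⟨v, -, rfl⟩ ⟨w, -, h⟩
    exact hab (List.cons.inj h).1.symm
  rw [hcover, Set.ncard_iUnion_of_finite (fun a => (finite_setOf_length_eq_and n _).image _)
    hdisjoint, finsum_eq_sum_of_fintype]
  exact Finset.sum_congr rfl fun a _ => Set.ncard_image_of_injective _ List.cons_injective

theorem wordSeries_eq_C_add_X_mul_sum [Fintype α] (P : List α → Prop) [Decidable (P [])] :
    wordSeries P = C (if P [] then 1 else 0) + X * ∑ a, wordSeries fun w => P (a :: w) := by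
  ext (_ | n)
  · rw [coeff_wordSeries, ncard_length_zero_and]
    simp
  · rw [coeff_wordSeries, ncard_length_succ_and, map_add, coeff_succ_C, coeff_succ_X_mul, map_sum]
    simp [coeff_wordSeries]

theorem coeff_wordSeries_mul [Finite α] [Finite β] (n : ℕ) (P : List α → Prop)
    (Q : List β → Prop) :
    coeff n (wordSeries P * wordSeries Q) =
      ({x : List α × List β | x.1.length + x.2.length = n ∧ P x.1 ∧ Q x.2}.ncard : ℤ) := by
  have hcover : {x : List α × List β | x.1.length + x.2.length = n ∧ P x.1 ∧ Q x.2} =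
      ⋃ k ∈ (Finset.HasAntidiagonal.antidiagonal n : Set (ℕ × ℕ)),
        {v | v.length = k.1 ∧ P v} ×ˢ {w | w.length = k.2 ∧ Q w} := by
    ext ⟨v, w⟩
    simp only [Set.mem_ofPred_eq, Set.mem_iUnion, Set.mem_prod, Finset.mem_coe,
      Finset.HasAntidiagonal.mem_antidiagonal, exists_prop]
    exact ⟨fun ⟨hn, hP, hQ⟩ => ⟨(v.length, w.length), hn, ⟨rfl, hP⟩, rfl, hQ⟩,
      fun ⟨_, hk, ⟨hv, hP⟩, hw, hQ⟩ => ⟨hv ▸ hw ▸ hk, hP, hQ⟩⟩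
  have hdisjoint : (Finset.HasAntidiagonal.antidiagonal n : Set (ℕ × ℕ)).PairwiseDisjoint
      fun k => {v : List α | v.length = k.1 ∧ P v} ×ˢ {w : List β | w.length = k.2 ∧ Q w} := by
    intro k _ l _ hkl
    rw [Function.onFun, Set.disjoint_left]
    rintro ⟨v, w⟩ ⟨hv, hw⟩ ⟨hv', hw'⟩
    exact hkl (Prod.ext (hv.1.symm.trans hv'.1) (hw.1.symm.trans hw'.1))
  rw [hcover, Set.Finite.ncard_biUnion (Finset.finite_toSet _)
    (fun k _ => (finite_setOf_length_eq_and _ _).prod (finite_setOf_length_eq_and _ _)) hdisjoint,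
    finsum_mem_coe_finset, coeff_mul, Nat.cast_sum]
  simp only [coeff_wordSeries, Set.ncard_prod, Nat.cast_mul]

end WordSeries

theorem eq_zero_of_X_pow_dvd_succ {ι R : Type*} [Semiring R] {F : ι → R⟦X⟧}
    (hF : ∀ n, (∀ i, X ^ n ∣ F i) → ∀ i, X ^ (n + 1) ∣ F i) (i : ι) : F i = 0 := by
  have hdvd : ∀ n i, X ^ n ∣ F i := fun n => by
    induction n with
    | zero => simp
    | succ n ih => exact hF n ih
  ext n
  exact X_pow_dvd_iff.1 (hdvd (n + 1) i) n n.lt_succ_self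

/-! ### Indicator words and domination of prefixes -/

section Marks

variable {α : Type*} [BEq α]

/-- The indicator word of the occurrences of the letter `x` in `l`. -/
def marks (x : α) (l : List α) : List Bool := l.map (· == x)

theorem length_marks (x : α) (l : List α) : (marks x l).length = l.length := List.length_map _

theorem marks_nil (x : α) : marks x [] = [] := rfl

theorem marks_cons (x a : α) (l : List α) : marks x (a :: l) = (a == x) :: marks x l := rfl

theorem marks_append (x : α) (l l' : List α) : marks x (l ++ l') = marks x l ++ marks x l' :=
  List.map_append

theorem take_marks (x : α) (l : List α) (i : ℕ) : (marks x l).take i = marks x (l.take i) :=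
  (List.map_take ..).symm

theorem count_marks (x : α) (l : List α) : (marks x l).count true = l.count x := by
  simp [marks, List.count, List.countP_map, Function.comp_def]

theorem getD_marks [LawfulBEq α] (x : α) (l : List α) (i : ℕ) :
    (marks x l).getD i false = true ↔ l[i]? = some x := by
  cases h : l[i]? <;> simp [marks, h]

end Marks

/-- Every prefix of `U` contains at most `h` more letters `true` than the prefix of `D` of the same
length. For the indicator words of the down and up steps, this is the condition that a path from
height `h` stays nonnegative. -/
def PrefixLE (h : ℕ) (U D : List Bool) : Prop :=
  ∀ i, (U.take i).count true ≤ h + (D.take i).count true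

theorem prefixLE_nil (h : ℕ) : PrefixLE h [] [] := fun i => by simp

theorem prefixLE_cons (h : ℕ) (x y : Bool) (U D : List Bool) :
    PrefixLE h (x :: U) (y :: D) ↔
      ∀ i, (U.take i).count true + x.toNat ≤ h + (D.take i).count true + y.toNat := by
  refine ⟨fun H i => ?_, fun H i => ?_⟩
  · have := H (i + 1)
    cases x <;> cases y <;> simpa [← add_assoc] using this
  · rcases i with _ | i
    · simp
    · have := H i
      cases x <;> cases y <;> simpa [← add_assoc] using this

theorem prefixLE_cons_self (h : ℕ) (x : Bool) (U D : List Bool) :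
    PrefixLE h (x :: U) (x :: D) ↔ PrefixLE h U D :=
  (prefixLE_cons _ _ _ _ _).trans (by simp [PrefixLE])

theorem prefixLE_false_true (h : ℕ) (U D : List Bool) :
    PrefixLE h (false :: U) (true :: D) ↔ PrefixLE (h + 1) U D :=
  (prefixLE_cons _ _ _ _ _).trans (by simp [PrefixLE, add_right_comm])

theorem prefixLE_succ_true_false (h : ℕ) (U D : List Bool) :
    PrefixLE (h + 1) (true :: U) (false :: D) ↔ PrefixLE h U D :=
  (prefixLE_cons _ _ _ _ _).trans (by simp [PrefixLE, add_right_comm])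

theorem not_prefixLE_zero_true_false (U D : List Bool) :
    ¬ PrefixLE 0 (true :: U) (false :: D) :=
  fun H => by simpa using H 1

theorem forall_prefix_count_le_iff {α : Type*} [BEq α] [LawfulBEq α] (x y : α) (l : List α) :
    (∀ p, p <+: l → p.count x ≤ p.count y) ↔ PrefixLE 0 (marks x l) (marks y l) := by
  simp only [PrefixLE, take_marks, count_marks, zero_add]
  refine ⟨fun H i => H _ (List.take_prefix i l), fun H p hp => ?_⟩
  rw [List.prefix_iff_eq_take.1 hp]
  exact H _

theorem prefixLE_append {h h' : ℕ} {U₁ D₁ U₂ D₂ : List Bool} (hlen : U₁.length = D₁.length)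
    (hcount : h + D₁.count true = U₁.count true + h') :
    PrefixLE h (U₁ ++ U₂) (D₁ ++ D₂) ↔ PrefixLE h U₁ D₁ ∧ PrefixLE h' U₂ D₂ := by
  induction U₁ generalizing D₁ h with
  | nil =>
    obtain rfl := List.length_eq_zero_iff.1 hlen.symm
    obtain rfl : h = h' := by simpa using hcount
    simp [PrefixLE]
  | cons x U₁ ih =>
    obtain _ | ⟨y, D₁⟩ := D₁
    · simp at hlen
    simp only [List.length_cons, Nat.add_right_cancel_iff] at hlen
    simp only [List.cons_append]
    cases x <;> cases y <;> rcases h with _ | h <;>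
      simp only [prefixLE_cons_self, prefixLE_false_true, prefixLE_succ_true_false,
        not_prefixLE_zero_true_false, false_and] <;>
      exact ih hlen (by simp at hcount; omega)

theorem count_take_reverse (l : List Bool) (i : ℕ) :
    (l.reverse.take i).count true + (l.take (l.length - i)).count true = l.count true := by
  rw [List.take_reverse, List.count_reverse, add_comm, ← List.count_append, List.take_append_drop]

theorem prefixLE_reverse {h : ℕ} {U D : List Bool} (hlen : U.length = D.length)
    (hcount : D.count true = U.count true + h) :
    PrefixLE 0 U.reverse D.reverse ↔ PrefixLE h D U := by
  have hU := count_take_reverse U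
  have hD := count_take_reverse D
  constructor <;> intro H i
  · obtain hi | hi := le_total i U.length
    · have := H (U.length - i)
      have := hU (U.length - i)
      have := hD (U.length - i)
      simp only [← hlen, Nat.sub_sub_self hi] at *
      omega
    · rw [List.take_of_length_le hi, List.take_of_length_le (hlen ▸ hi), hcount, add_comm]
  · have := H (U.length - i)
    have := hU i
    have := hD i
    rw [← hlen] at *
    omega

/-! ### Distances between occurrences -/

/-- The distance between the `t`-th occurrence of `true` in `l` and the previous one (or the
beginning of the word), with `t` counted from `0`. -/
def gap : ℕ → List Bool → ℕ
  | _, [] => 0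
  | 0, true :: _ => 1
  | 0, false :: l => gap 0 l + 1
  | t + 1, true :: l => gap t l
  | t + 1, false :: l => gap (t + 1) l

theorem gap_pos {t : ℕ} {l : List Bool} (h : t < l.count true) : 0 < gap t l := by
  induction l generalizing t with
  | nil => simp at h
  | cons x l ih => cases x <;> rcases t with _ | t <;> simp_all [gap]

theorem gap_append_left {t : ℕ} {l : List Bool} (h : t < l.count true) (l' : List Bool) :
    gap t (l ++ l') = gap t l := by
  induction l generalizing t with
  | nil => simp at h
  | cons x l ih => cases x <;> rcases t with _ | t <;> simp_all [gap]

theorem gap_append_true_right (t : ℕ) (l l' : List Bool) :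
    gap (l.count true + t + 1) (l ++ true :: l') = gap t l' := by
  induction l with
  | nil => simp [gap]
  | cons x l ih => cases x <;> simpa [gap, add_right_comm] using ih

theorem gap_append_false_true {t : ℕ} {l : List Bool} (h : t ≤ l.count true) :
    gap t (l ++ [false, true]) = gap t (l ++ [true]) + if t = l.count true then 1 else 0 := by
  induction l generalizing t with
  | nil =>
    obtain rfl : t = 0 := by simpa using h
    rfl
  | cons x l ih => cases x <;> rcases t with _ | t <;> simp_all [gap, add_right_comm]

theorem gap_reverse_append_true {t t' : ℕ} {l : List Bool} (h : t + t' = l.count true) :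
    gap t (l.reverse ++ [true]) = gap t' (l ++ [true]) := by
  induction l generalizing t t' with
  | nil =>
    obtain ⟨rfl, rfl⟩ : t = 0 ∧ t' = 0 := by simpa using h
    rfl
  | cons x l ih =>
    rw [List.reverse_cons, List.append_assoc]
    cases x
    · rw [List.count_cons_of_ne Bool.false_ne_true] at h
      have hgap := gap_append_false_true (t := t) (l := l.reverse)
        (by rw [List.count_reverse]; omega)
      rw [List.count_reverse, ih h] at hgap
      refine hgap.trans ?_
      obtain _ | t' := t'
      · rw [if_pos (by simpa using h)]
        rfl
      · rw [if_neg (by omega)]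
        rfl
    · rw [List.count_cons_self] at h
      obtain _ | t' := t'
      · obtain rfl : t = l.reverse.count true + 0 + 1 := by rw [List.count_reverse]; omega
        exact gap_append_true_right 0 l.reverse [true]
      · have hlt : t < (l.reverse ++ [true]).count true := by
          rw [List.count_append, List.count_reverse, List.count_singleton_self]
          omega
        rw [← List.append_assoc, gap_append_left hlt, ih (t' := t') (by omega)]
        rfl

/-! ### Motzkin paths from a given height -/

/-- `MotzkinFrom j w` says that the path that starts at height `j` and follows `w` stays
nonnegative and ends at height `0`. -/
def MotzkinFrom : ℕ → List (Option Bool) → Prop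
  | j, [] => j = 0
  | j, some true :: w => MotzkinFrom (j + 1) w
  | j, none :: w => MotzkinFrom j w
  | 0, some false :: _ => False
  | j + 1, some false :: w => MotzkinFrom j w

theorem motzkinFrom_iff (j : ℕ) (w : List (Option Bool)) :
    MotzkinFrom j w ↔ w.count (some false) = w.count (some true) + j ∧
      PrefixLE j (marks (some false) w) (marks (some true) w) := by
  induction w generalizing j with
  | nil => simp [MotzkinFrom, marks_nil, prefixLE_nil, eq_comm]
  | cons x w ih =>
    obtain _ | _ | _ := x
    · simp [MotzkinFrom, marks_cons, prefixLE_cons_self, ih]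
    · obtain _ | j := j
      · simp [MotzkinFrom, marks_cons, not_prefixLE_zero_true_false]
      · simp [MotzkinFrom, marks_cons, prefixLE_succ_true_false, ih, ← add_assoc]
    · simp [MotzkinFrom, marks_cons, prefixLE_false_true, ih, add_comm j, ← add_assoc]

theorem MotzkinFrom.count_eq {j : ℕ} {w : List (Option Bool)} (h : MotzkinFrom j w) :
    w.count (some false) = w.count (some true) + j :=
  ((motzkinFrom_iff j w).1 h).1

theorem isMotzkinWord_iff (w : List (Option Bool)) : IsMotzkinWord w ↔ MotzkinFrom 0 w := by
  rw [IsMotzkinWord, motzkinFrom_iff, forall_prefix_count_le_iff, add_zero]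

/-- The generating function of the paths from height `j` to height `0`. -/
noncomputable def motzkinSeries (j : ℕ) : ℤ⟦X⟧ := wordSeries (MotzkinFrom j)

theorem motzkinSeries_zero : motzkinSeries 0 = 1 + X * (motzkinSeries 0 + motzkinSeries 1) := by
  classical
  refine (wordSeries_eq_C_add_X_mul_sum _).trans ?_
  simp [motzkinSeries, MotzkinFrom, wordSeries_false]

theorem motzkinSeries_succ (j : ℕ) : motzkinSeries (j + 1) =
    X * (motzkinSeries (j + 1) + motzkinSeries (j + 2) + motzkinSeries j) := by
  classical
  refine (wordSeries_eq_C_add_X_mul_sum _).trans ?_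
  simp [motzkinSeries, MotzkinFrom, add_assoc]

/-- The series `y = x m(x)`, where `m` is the generating function of the Motzkin numbers. It
counts the paths that descend by one level, for the first time with their last step. -/
noncomputable def descentSeries : ℤ⟦X⟧ := X * motzkinSeries 0

section DescentSeries

local notation "y" => descentSeries

theorem motzkinSeries_succ_eq_mul (j : ℕ) : motzkinSeries (j + 1) = y * motzkinSeries j := by
  refine sub_eq_zero.1 (eq_zero_of_X_pow_dvd_succ
    (F := fun j => motzkinSeries (j + 1) - y * motzkinSeries j) (fun n h j => ?_) j)
  obtain _ | j := j
  · have hrec : motzkinSeries 1 - y * motzkinSeries 0 = X * ((motzkinSeries 1 - y * motzkinSeries 0)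
        + (motzkinSeries 2 - y * motzkinSeries 1)) := by
      rw [descentSeries]
      linear_combination motzkinSeries_succ 0 - X * motzkinSeries 0 * motzkinSeries_zero
    rw [zero_add, hrec, pow_succ']
    exact mul_dvd_mul_left X (dvd_add (h 0) (h 1))
  · have hrec : motzkinSeries (j + 2) - y * motzkinSeries (j + 1) =
        X * ((motzkinSeries (j + 2) - y * motzkinSeries (j + 1)) +
          (motzkinSeries (j + 3) - y * motzkinSeries (j + 2)) +
          (motzkinSeries (j + 1) - y * motzkinSeries j)) := by
      linear_combination motzkinSeries_succ (j + 1) - y * motzkinSeries_succ j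
    rw [hrec, pow_succ']
    exact mul_dvd_mul_left X (dvd_add (dvd_add (h (j + 1)) (h (j + 2))) (h j))

theorem X_mul_motzkinSeries (j : ℕ) : X * motzkinSeries j = y ^ (j + 1) := by
  induction j with
  | zero => rw [zero_add, pow_one, descentSeries]
  | succ j ih => rw [motzkinSeries_succ_eq_mul, pow_succ', ← ih]; ring

theorem descentSeries_eq : y = X * (1 + y + y ^ 2) := by
  have h := X_mul_motzkinSeries 1
  have h' : y = X * motzkinSeries 0 := rfl
  linear_combination h' + X * motzkinSeries_zero - X * h' + X * h

theorem X_dvd_descentSeries : X ∣ y := dvd_mul_right _ _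

theorem coeff_derivative_descentSeries (i : ℕ) :
    coeff i (derivative ℤ y) = (i + 1) * coeff i (motzkinSeries 0) := by
  rw [coeff_derivative, descentSeries, coeff_succ_X_mul, mul_comm]

theorem one_sub_descentSeries_sq_mul :
    (1 - y ^ 2) * (1 + X ^ 2 * derivative ℤ y) = 1 := by
  have h := descentSeries_eq
  have h' : derivative ℤ y = (1 + y + y ^ 2) + X * (derivative ℤ y + 2 * y * derivative ℤ y) := by
    conv_lhs => rw [h]
    simp [Derivation.leibniz, Derivation.leibniz_pow]
    ring
  linear_combination X ^ 2 * (1 + y + y ^ 2) * h' -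
    (X ^ 2 * derivative ℤ y * (1 + 2 * y) + (y + X * (1 + y + y ^ 2))) * h

theorem coeff_geom_sum_sq_descentSeries_mul {n N : ℕ} (hN : N < n) (f : ℤ⟦X⟧) :
    coeff N ((∑ h ∈ Finset.range n, (y ^ 2) ^ h) * f) =
      coeff N ((1 + X ^ 2 * derivative ℤ y) * f) := by
  have hsum : ∑ h ∈ Finset.range n, (y ^ 2) ^ h =
      (1 + X ^ 2 * derivative ℤ y) - (y ^ 2) ^ n * (1 + X ^ 2 * derivative ℤ y) := by
    linear_combination (1 + X ^ 2 * derivative ℤ y) * mul_neg_geom_sum (y ^ 2) n -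
      (∑ h ∈ Finset.range n, (y ^ 2) ^ h) * one_sub_descentSeries_sq_mul
  have hdvd : X ^ n ∣ (y ^ 2) ^ n * (1 + X ^ 2 * derivative ℤ y) * f :=
    ((pow_dvd_pow_of_dvd (X_dvd_descentSeries.trans (dvd_pow_self y two_ne_zero)) n).mul_right
      _).mul_right _
  rw [hsum, sub_mul, map_sub, X_pow_dvd_iff.1 hdvd N hN, sub_zero]

end DescentSeries

/-- The distance between the `t`-th down step of `w` and the previous one, where `w` is closed by
an extra down step. -/
def downGap (t : ℕ) (w : List (Option Bool)) : ℕ := gap t (marks (some false) w ++ [true])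

theorem downGap_zero_nil : downGap 0 [] = 1 := rfl

theorem downGap_zero_down (w : List (Option Bool)) : downGap 0 (some false :: w) = 1 := rfl

theorem downGap_zero_up (w : List (Option Bool)) :
    downGap 0 (some true :: w) = downGap 0 w + 1 := rfl

theorem downGap_zero_level (w : List (Option Bool)) :
    downGap 0 (none :: w) = downGap 0 w + 1 := rfl

theorem downGap_succ_down (t : ℕ) (w : List (Option Bool)) :
    downGap (t + 1) (some false :: w) = downGap t w := rfl

theorem downGap_succ_up (t : ℕ) (w : List (Option Bool)) :
    downGap (t + 1) (some true :: w) = downGap (t + 1) w := rfl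

theorem downGap_succ_level (t : ℕ) (w : List (Option Bool)) :
    downGap (t + 1) (none :: w) = downGap (t + 1) w := rfl

theorem downGap_zero_ne_zero (w : List (Option Bool)) : downGap 0 w ≠ 0 := by
  rcases w with _ | ⟨_ | _ | _, w⟩ <;>
    simp [downGap_zero_nil, downGap_zero_down, downGap_zero_up, downGap_zero_level]

theorem downGap_zero_eq_iff (w : List (Option Bool)) (k : ℕ) :
    downGap 0 w = k + 1 ↔
      (w.length = k ∨ w.getD k none = some false) ∧ ∀ j < k, w.getD j none ≠ some false := by
  induction w generalizing k with
  | nil => simp [downGap_zero_nil, eq_comm]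
  | cons x w ih =>
    rcases x with _ | _ | _ <;> rcases k with _ | k <;>
      simp [downGap_zero_down, downGap_zero_up, downGap_zero_level, downGap_zero_ne_zero, ih,
        Nat.forall_lt_succ_left, -Order.lt_add_one_iff]

/-- The generating function of the paths to height `0` on which the `t`-th distance between down
steps is `r`. The starting height is written `t + e`, so that it is at least `t`. -/
noncomputable def gapSeries (t e r : ℕ) : ℤ⟦X⟧ :=
  wordSeries fun w => MotzkinFrom (t + e) w ∧ downGap t w = r

theorem gapSeries_zero_one (e : ℕ) : gapSeries 0 e 1 = descentSeries ^ e := by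
  classical
  refine (wordSeries_eq_C_add_X_mul_sum _).trans ?_
  rcases e with _ | e
  · simp [MotzkinFrom, downGap_zero_nil, downGap_zero_up, downGap_zero_level,
      downGap_zero_ne_zero, wordSeries_false]
  · rw [← X_mul_motzkinSeries]
    simp [MotzkinFrom, motzkinSeries, downGap_zero_down, downGap_zero_up, downGap_zero_level,
      downGap_zero_ne_zero, wordSeries_false]

theorem gapSeries_zero_succ (e r : ℕ) :
    gapSeries 0 e (r + 2) = X * (gapSeries 0 (e + 1) (r + 1) + gapSeries 0 e (r + 1)) := by
  classical
  refine (wordSeries_eq_C_add_X_mul_sum _).trans ?_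
  rcases e with _ | e <;>
    simp [gapSeries, MotzkinFrom, downGap_zero_nil, downGap_zero_down, downGap_zero_up,
      downGap_zero_level, wordSeries_false, add_comm]

theorem gapSeries_zero (e r : ℕ) :
    gapSeries 0 e (r + 1) = descentSeries ^ e * (X * (1 + descentSeries)) ^ r := by
  induction r generalizing e with
  | zero => rw [gapSeries_zero_one, pow_zero, mul_one]
  | succ r ih => rw [gapSeries_zero_succ, ih, ih]; ring

theorem gapSeries_succ (t e r : ℕ) : gapSeries (t + 1) e r =
    X * (gapSeries (t + 1) e r + gapSeries (t + 1) (e + 1) r + gapSeries t e r) := by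
  classical
  refine (wordSeries_eq_C_add_X_mul_sum _).trans ?_
  simp [gapSeries, Nat.add_right_comm t 1, MotzkinFrom, downGap_succ_down, downGap_succ_up,
    downGap_succ_level, ← add_assoc]

theorem gapSeries_eq (t e r : ℕ) :
    gapSeries t e (r + 1) = descentSeries ^ (t + e) * (X * (1 + descentSeries)) ^ r := by
  let F : ℕ × ℕ → ℤ⟦X⟧ := fun p =>
    gapSeries p.1 p.2 (r + 1) - descentSeries ^ (p.1 + p.2) * (X * (1 + descentSeries)) ^ r
  suffices hF : F (t, e) = 0 from sub_eq_zero.1 hF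
  refine eq_zero_of_X_pow_dvd_succ (fun n h => ?_) (t, e)
  rintro ⟨_ | t, e⟩
  · simp [F, gapSeries_zero]
  · have hrec : F (t + 1, e) = X * (F (t + 1, e) + F (t + 1, e + 1) + F (t, e)) := by
      simp only [F]
      linear_combination gapSeries_succ t e (r + 1) -
        descentSeries ^ (t + e) * (X * (1 + descentSeries)) ^ r * descentSeries_eq
    rw [hrec, pow_succ']
    exact mul_dvd_mul_left X (dvd_add (dvd_add (h _) (h _)) (h _))

theorem coeff_motzkinSeries_zero (n : ℕ) : coeff n (motzkinSeries 0) = (motzkin n : ℤ) := by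
  simp only [motzkinSeries, coeff_wordSeries, motzkin, isMotzkinWord_iff]

theorem coeff_gapSeries_zero_zero (n k : ℕ) :
    coeff n (gapSeries 0 0 (k + 1)) = (motzkinBallot n (k + 1) : ℤ) := by
  by_cases hnk : n + 1 = k + 1
  · obtain rfl : n = k := Nat.succ_injective hnk
    rw [gapSeries_zero, motzkinBallot, if_pos rfl, pow_zero, one_mul, mul_pow, coeff_X_pow_mul',
      if_pos le_rfl, Nat.sub_self, coeff_zero_eq_constantCoeff_apply]
    simp [X_dvd_iff.1 X_dvd_descentSeries]
  · rw [gapSeries, coeff_wordSeries, motzkinBallot, if_neg hnk]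
    congr 3
    ext w
    refine and_congr_right fun hw => ?_
    rw [isMotzkinWord_iff, Nat.zero_add, downGap_zero_eq_iff, or_iff_right (by omega)]
    rfl

theorem motzkinBallot_eq_zero {n k : ℕ} (h : n < k) : motzkinBallot n (k + 1) = 0 := by
  rw [← Int.natCast_inj, ← coeff_gapSeries_zero_zero, gapSeries_zero, pow_zero, one_mul, mul_pow,
    coeff_X_pow_mul', if_neg h.not_ge, Nat.cast_zero]

theorem coeff_sum_gapSeries_mul (N r s : ℕ) :
    coeff N (∑ h ∈ Finset.range (N + 1), gapSeries h 0 (r + 1) * gapSeries h 0 (s + 1)) =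
      motzkinBallot N (r + s + 1) + ∑ i ∈ Finset.range (N - 1),
        (i + 1) * (motzkin i : ℤ) * motzkinBallot (N - 2 - i) (r + s + 1) := by
  have hprod (h : ℕ) : gapSeries h 0 (r + 1) * gapSeries h 0 (s + 1) =
      (descentSeries ^ 2) ^ h * gapSeries 0 0 (r + s + 1) := by
    simp only [gapSeries_eq]
    ring
  simp only [hprod, ← Finset.sum_mul]
  rw [coeff_geom_sum_sq_descentSeries_mul N.lt_succ_self, add_mul, one_mul, map_add,
    coeff_gapSeries_zero_zero, mul_assoc, coeff_X_pow_mul']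
  congr 1
  split_ifs with hN
  · rw [coeff_mul, Finset.Nat.sum_antidiagonal_eq_sum_range_succ_mk,
      show (N - 2).succ = N - 1 by omega]
    simp only [coeff_derivative_descentSeries, coeff_motzkinSeries_zero, coeff_gapSeries_zero_zero]
  · rw [show N - 1 = 0 by omega, Finset.sum_range_zero]

/-! ### Turns of a word of up and down steps -/

/-- The first letter of a word. The empty word counts as followed by an up step, which makes the
last down step of a Dyck path a turn. -/
def firstStep : List Bool → Bool
  | [] => true
  | x :: _ => x

@[simp] theorem firstStep_nil : firstStep [] = true := rfl

@[simp] theorem firstStep_cons (x : Bool) (w : List Bool) : firstStep (x :: w) = x := rfl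

/-- For each occurrence of the step `c` in `w`, whether it is a turn, that is, whether the next step
is different. -/
def turns (c : Bool) : List Bool → List Bool
  | [] => []
  | x :: w => if x = c then (firstStep w != c) :: turns c w else turns c w

theorem turns_nil (c : Bool) : turns c [] = [] := rfl

theorem turns_cons_self (c : Bool) (w : List Bool) :
    turns c (c :: w) = (firstStep w != c) :: turns c w := if_pos rfl

theorem turns_true_cons_false (w : List Bool) : turns true (false :: w) = turns true w := rfl

theorem turns_false_cons_true (w : List Bool) : turns false (true :: w) = turns false w := rfl

theorem length_turns (c : Bool) (w : List Bool) : (turns c w).length = w.count c := by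
  induction w with
  | nil => rfl
  | cons x w ih => by_cases hx : x = c <;> simp [turns, hx, ih]

theorem count_turns (w : List Bool) :
    (turns true w).count true + (!firstStep w).toNat = (turns false w).count true := by
  induction w with
  | nil => rfl
  | cons x w ih => cases x <;> cases h : firstStep w <;> simp_all [turns]

theorem getLast?_turns_false (w : List Bool) : ∀ x ∈ (turns false w).getLast?, x = true := by
  induction w with
  | nil => simp [turns_nil]
  | cons x w ih =>
    cases x
    · rcases h : turns false w with _ | ⟨b, l⟩
      · rcases w with _ | ⟨_ | _, w⟩ <;> simp_all [turns]
      · simpa [turns, h, List.getLast?_cons_cons] using ih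
    · exact ih

theorem turns_injective {w w' : List Bool} (h : firstStep w = firstStep w')
    (ht : turns true w = turns true w') (hf : turns false w = turns false w') : w = w' := by
  induction w generalizing w' with
  | nil => rcases w' with _ | ⟨_ | _, w'⟩ <;> simp_all [turns]
  | cons x w ih =>
    obtain _ | ⟨x', w'⟩ := w'
    · cases x <;> simp_all [turns]
    obtain rfl : x = x' := h
    refine congrArg (x :: ·) ?_
    cases x
    · simp only [turns_cons_self, turns_true_cons_false, List.cons.injEq] at ht hf
      exact ih (by simpa using hf.1) ht hf.2
    · simp only [turns_cons_self, turns_false_cons_true, List.cons.injEq] at ht hf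
      exact ih (by simpa using ht.1) ht.2 hf

theorem exists_turns_eq (c : Bool) (U D : List Bool)
    (hcount : U.count true + (!c).toNat = D.count true) (hlast : ∀ x ∈ D.getLast?, x = true) :
    ∃ w, firstStep w = c ∧ turns true w = U ∧ turns false w = D := by
  induction hN : U.length + D.length generalizing c U D with
  | zero =>
    obtain ⟨rfl, rfl⟩ : U = [] ∧ D = [] := by simpa using hN
    obtain rfl : c = true := by simpa using hcount
    exact ⟨[], rfl, rfl, rfl⟩
  | succ N ih =>
    cases c
    · obtain _ | ⟨b, D⟩ := D
      · simp at hcount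
      have hlast' : ∀ x ∈ D.getLast?, x = true := by
        rcases D with _ | ⟨b', D⟩ <;> simp_all [List.getLast?_cons_cons]
      obtain ⟨w, h, rfl, rfl⟩ := ih b U D (by cases b <;> simp_all) hlast'
        (by rw [List.length_cons] at hN; omega)
      exact ⟨false :: w, rfl, rfl, by simp [turns_cons_self, h]⟩
    · obtain _ | ⟨b, U⟩ := U
      · obtain rfl | ⟨D, b, rfl⟩ := D.eq_nil_or_concat
        · simp at hN
        · simp [hlast b (by simp)] at hcount
      obtain ⟨w, h, rfl, rfl⟩ := ih (!b) U D (by cases b <;> simp_all) hlast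
        (by rw [List.length_cons] at hN; omega)
      exact ⟨true :: w, rfl, by simp [turns_cons_self, h], rfl⟩

/-- The number of letters `!c` between the `i`-th occurrence of `c` in `w`, with `i` counted from
`0`, and the next one (or the end of the word). -/
def countBetween (c : Bool) (w : List Bool) (i : ℕ) : ℕ :=
  ((w.take (w.idxOfNth c (i + 1))).drop (w.idxOfNth c i + 1)).count (!c)

theorem getD_findIdxs_beq {c : Bool} {w : List Bool} {i : ℕ} (h : i < w.count c) :
    (w.findIdxs (· == c)).getD i 0 = w.idxOfNth c i := by
  rw [List.getD_eq_getElem _ _ (by rwa [List.length_findIdxs]), List.getElem_findIdxs_eq_findIdxNth]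
  rfl

theorem rStat_succ_eq_countBetween {w : List Bool} {i : ℕ} (h : i + 1 < w.count true) :
    rStat w (i + 1) = countBetween true w i := by
  rw [rStat, upIdxs, getD_findIdxs_beq h, Nat.add_sub_cancel,
    getD_findIdxs_beq (Nat.lt_of_succ_lt h)]
  rfl

theorem sStat_succ_eq_countBetween {w : List Bool} {i : ℕ} (h : i + 1 < w.count false) :
    sStat w (i + 1) = countBetween false w i := by
  rw [sStat, downIdxs, getD_findIdxs_beq h, Nat.add_sub_cancel,
    getD_findIdxs_beq (Nat.lt_of_succ_lt h)]
  rfl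

theorem countBetween_cons_not (c : Bool) (w : List Bool) (i : ℕ) :
    countBetween c ((!c) :: w) i = countBetween c w i := by
  simp [countBetween, List.idxOfNth_cons_of_not_beq]

theorem countBetween_cons_self_succ (c : Bool) (w : List Bool) (i : ℕ) :
    countBetween c (c :: w) (i + 1) = countBetween c w i := by
  simp [countBetween]

theorem count_take_idxOf (c : Bool) (w : List Bool) :
    (w.take (w.idxOf c)).count (!c) = w.idxOf c := by
  induction w with
  | nil => rfl
  | cons x w ih => obtain rfl | rfl := x.eq_or_eq_not c <;> simp [ih]

theorem countBetween_cons_self_zero (c : Bool) (w : List Bool) :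
    countBetween c (c :: w) 0 = w.idxOf c := by
  simp [countBetween, List.idxOfNth_zero, count_take_idxOf]

theorem idxOf_eq_zero_of_firstStep_eq {c : Bool} {w : List Bool} (h : firstStep w = c) :
    w.idxOf c = 0 := by
  rcases w with _ | ⟨x, w⟩ <;> simp_all

theorem idxOf_eq_gap_turns_not {c : Bool} {w : List Bool} (h : firstStep w = !c) :
    w.idxOf c = gap 0 (turns (!c) w) := by
  induction w with
  | nil => rfl
  | cons x w ih =>
    obtain rfl : x = !c := h
    obtain hw | hw := (firstStep w).eq_or_eq_not c
    · simp [turns_cons_self, gap, idxOf_eq_zero_of_firstStep_eq hw, hw]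
    · simp [turns_cons_self, gap, ih hw, hw]

theorem countBetween_eq_gap_turns (c : Bool) (w : List Bool) (i : ℕ) :
    countBetween c w i = if (turns c w).getD i false then
      gap (((turns c w).take i).count true + (firstStep w != c).toNat) (turns (!c) w) else 0 := by
  induction w generalizing i with
  | nil => simp [turns_nil, countBetween]
  | cons x w ih =>
    obtain rfl | rfl := x.eq_or_eq_not c
    · obtain _ | i := i
      · rw [countBetween_cons_self_zero]
        obtain hw | hw := (firstStep w).eq_or_eq_not x
        · simp [turns_cons_self, hw, idxOf_eq_zero_of_firstStep_eq hw]
        · simp [turns, hw, idxOf_eq_gap_turns_not hw]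
      · rw [countBetween_cons_self_succ, ih]
        cases x <;> cases h : firstStep w <;> simp [turns, h]
    · rw [countBetween_cons_not, ih]
      cases c <;> cases h : firstStep w <;> simp [turns, gap, h]

/-! ### Dyck words through their turns -/

theorem prefixLE_marks_iff_turns (e : ℕ) (w : List Bool) :
    PrefixLE e (marks false w) (marks true w) ↔
      ∀ i, (!firstStep w).toNat + ((turns true w).take i).count true ≤
        ((turns false w).take (e + i)).count true := by
  induction w generalizing e with
  | nil => simp [turns_nil, marks_nil, prefixLE_nil]
  | cons x w ih =>
    cases x
    · obtain _ | e := e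
      · refine iff_of_false (not_prefixLE_zero_true_false _ _) fun h => ?_
        simpa using h 0
      · rw [marks_cons, marks_cons]
        refine (prefixLE_succ_true_false ..).trans <| (ih e).trans <| forall_congr' fun i => ?_
        rw [turns_cons_self, turns_true_cons_false, add_right_comm]
        cases firstStep w <;> simp [add_comm]
    · rw [marks_cons, marks_cons]
      refine (prefixLE_false_true ..).trans <| (ih (e + 1)).trans ?_
      have htake (i : ℕ) : (!firstStep w).toNat + ((turns true w).take i).count true =
          ((turns true (true :: w)).take (i + 1)).count true := by
        cases h : firstStep w <;> simp [turns_cons_self, h, add_comm]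
      simp only [htake, add_assoc, add_comm 1, turns_false_cons_true]
      refine ⟨fun h i => ?_, fun h i => by simpa using h (i + 1)⟩
      obtain _ | i := i
      · simp
      · simpa using h i

theorem isDyckWord_iff {n : ℕ} {w : List Bool} : IsDyckWord n w ↔ w.count true = n ∧
    w.count false = n ∧ firstStep w = true ∧ PrefixLE 0 (turns true w) (turns false w) := by
  rw [IsDyckWord, forall_prefix_count_le_iff, prefixLE_marks_iff_turns]
  have hlen := List.count_true_add_count_false w
  refine ⟨fun ⟨_, ht, hf, h⟩ => ?_, fun ⟨ht, hf, h0, h⟩ => ⟨by omega, ht, hf, fun i => ?_⟩⟩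
  · have h0 : firstStep w = true := by simpa using h 0
    exact ⟨ht, hf, h0, fun i => by simpa [h0] using h i⟩
  · simpa [h0] using h i

theorem count_take_lt {l : List Bool} {i : ℕ} (h : l.getD i false = true) :
    (l.take i).count true < l.count true := by
  induction l generalizing i with
  | nil => simp at h
  | cons x l ih =>
    obtain _ | i := i
    · simp_all
    · cases x <;> simpa using ih (by simpa using h)

section IsDyckWord

variable {n i : ℕ} {w : List Bool}

theorem count_turns_of_isDyckWord (hw : IsDyckWord n w) :
    (turns true w).count true = (turns false w).count true := by
  simpa [(isDyckWord_iff.1 hw).2.2.1] using count_turns w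

theorem rStat_succ_eq_gap (hw : IsDyckWord n w) (hi : i + 1 < n) :
    rStat w (i + 1) = if (turns true w).getD i false then
      gap (((turns true w).take i).count true) (turns false w) else 0 := by
  obtain ⟨ht, -, h0, -⟩ := isDyckWord_iff.1 hw
  rw [rStat_succ_eq_countBetween (ht ▸ hi), countBetween_eq_gap_turns, h0]
  rfl

theorem sStat_succ_eq_gap (hw : IsDyckWord n w) (hi : i + 1 < n) :
    sStat w (i + 1) = if (turns false w).getD i false then
      gap (((turns false w).take i).count true + 1) (turns true w) else 0 := by
  obtain ⟨-, hf, h0, -⟩ := isDyckWord_iff.1 hw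
  rw [sStat_succ_eq_countBetween (hf ▸ hi), countBetween_eq_gap_turns, h0]
  rfl

theorem exists_turns_eq_append (hw : IsDyckWord n w) (hn : 0 < n) :
    ∃ U D, turns true w = U ++ [true] ∧ turns false w = D ++ [true] ∧
      U.length + 1 = n ∧ D.length + 1 = n := by
  obtain ⟨ht, hf, -, hle⟩ := isDyckWord_iff.1 hw
  have hcount := count_turns_of_isDyckWord hw
  have hlast := getLast?_turns_false w
  rw [← length_turns] at ht hf
  obtain hU | ⟨U, x, hU⟩ := (turns true w).eq_nil_or_concat
  · simp [hU, hn.ne] at ht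
  obtain hD | ⟨D, y, hD⟩ := (turns false w).eq_nil_or_concat
  · simp [hD, hn.ne] at hf
  simp only [hU, hD, List.concat_eq_append, List.length_append, List.length_singleton,
    List.count_append, List.getLast?_concat, Option.mem_some_iff, forall_eq']
    at ht hf hcount hlast hle
  subst hlast
  have hle := hle U.length
  rw [List.take_left, List.take_left' (by omega)] at hle
  cases x
  · simp at hcount
    omega
  · exact ⟨U, D, by simpa using hU, by simpa using hD, ht, hf⟩

theorem rStat_succ_pos_iff (hw : IsDyckWord n w) (hi : i + 1 < n) :
    0 < rStat w (i + 1) ↔ (turns true w).getD i false = true := by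
  rw [rStat_succ_eq_gap hw hi]
  refine ⟨fun h => by_contra fun hU => ?_, fun hU => ?_⟩
  · rw [if_neg hU] at h
    exact h.false
  · rw [if_pos hU]
    exact gap_pos (count_turns_of_isDyckWord hw ▸ count_take_lt hU)

theorem sStat_succ_pos_iff (hw : IsDyckWord n w) (hi : i + 1 < n) :
    0 < sStat w (i + 1) ↔ (turns false w).getD i false = true := by
  rw [sStat_succ_eq_gap hw hi]
  refine ⟨fun h => by_contra fun hD => ?_, fun hD => ?_⟩
  · rw [if_neg hD] at h
    exact h.false
  · rw [if_pos hD]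
    refine gap_pos ?_
    obtain ⟨_, D, -, hD', -, hn⟩ := exists_turns_eq_append hw (by omega)
    rw [count_turns_of_isDyckWord hw, hD', List.take_append_of_le_length (by omega),
      List.count_append, List.count_singleton_self, Nat.add_lt_add_iff_right]
    rw [hD', List.getD_append _ _ _ _ (by omega)] at hD
    exact count_take_lt hD

end IsDyckWord

/-! ### Pairs of Motzkin words -/

/-- The turns of the Dyck word that corresponds to the pair `(A, B)`. Up to their common turn, the
turns among the up (down) steps are the up (down) steps of `A.reverse`; after it, they are the down
(up) steps of `B`. The last step of each kind is always a turn. -/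
def pairTurns (c : Bool) (A B : List (Option Bool)) : List Bool :=
  (marks (some c) A).reverse ++ true :: (marks (some (!c)) B ++ [true])

section PairTurns

variable (c : Bool) (A B : List (Option Bool))

theorem length_pairTurns : (pairTurns c A B).length = A.length + B.length + 2 := by
  simp [pairTurns, length_marks]
  omega

theorem count_pairTurns :
    (pairTurns c A B).count true = A.count (some c) + B.count (some (!c)) + 2 := by
  simp [pairTurns, count_marks]
  omega

theorem count_take_pairTurns :
    ((pairTurns c A B).take A.length).count true = A.count (some c) := by
  rw [pairTurns, List.take_left' (by simp [length_marks]), List.count_reverse, count_marks]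

theorem pairTurns_concat (a : Option Bool) :
    pairTurns c (A ++ [a]) B = (a == some c) :: pairTurns c A B := by
  simp [pairTurns, marks_append, marks_cons, marks_nil]

theorem getLast?_pairTurns : (pairTurns c A B).getLast? = some true := by
  rw [pairTurns, ← List.cons_append, ← List.append_assoc, List.getLast?_concat]

end PairTurns

theorem forall_getD_pairTurns_iff {A B : List (Option Bool)} {i : ℕ}
    (hi : i < A.length + B.length + 1) :
    (∀ c, (pairTurns c A B).getD i false = true) ↔ i = A.length := by
  induction A using List.reverseRecOn generalizing i with
  | nil =>
    obtain _ | i := i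
    · simp [pairTurns, marks_nil]
    · have hiB : i < B.length := by simpa using hi
      simp only [pairTurns, marks_nil, List.reverse_nil, List.nil_append, List.getD_cons_succ,
        List.getD_append _ _ _ _ (hiB.trans_eq (length_marks ..).symm), getD_marks]
      exact iff_of_false (fun h => by simpa [h true] using h false) (Nat.succ_ne_zero i)
  | append_singleton A a ih =>
    simp only [pairTurns_concat]
    obtain _ | i := i
    · simp only [List.getD_cons_zero, beq_iff_eq]
      exact iff_of_false (fun h => by simpa [h true] using h false) (by simp)
    · simpa using ih (i := i) (by simpa [add_right_comm] using hi)

theorem marks_some_injective {w w' : List (Option Bool)}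
    (h : ∀ c, marks (some c) w = marks (some c) w') : w = w' := by
  induction w generalizing w' with
  | nil => exact (List.map_eq_nil_iff.1 (h true).symm).symm
  | cons x w ih =>
    obtain _ | ⟨x', w'⟩ := w'
    · exact absurd (h true) (List.cons_ne_nil _ _)
    simp only [marks_cons, List.cons.injEq, forall_and] at h
    rw [ih h.2]
    have ht := h.1 true
    have hf := h.1 false
    rcases x with _ | _ | _ <;> rcases x' with _ | _ | _ <;> simp_all

theorem pairTurns_injective {A B A' B' : List (Option Bool)}
    (h : ∀ c, pairTurns c A B = pairTurns c A' B') : A = A' ∧ B = B' := by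
  have hlen : A.length = A'.length := by
    have hlen := congrArg List.length (h true)
    rw [length_pairTurns, length_pairTurns] at hlen
    rw [← forall_getD_pairTurns_iff (B := B') (by omega)]
    simp only [← h]
    exact (forall_getD_pairTurns_iff (by omega)).2 rfl
  have hmarks (c : Bool) := List.append_inj (h c) (by simpa [length_marks])
  simp only [List.reverse_inj, List.cons.injEq, true_and, List.append_cancel_right_eq] at hmarks
  exact ⟨marks_some_injective fun c => (hmarks c).1,
    marks_some_injective fun c => by simpa using (hmarks (!c)).2⟩

theorem exists_marks_eq {U D : List Bool} (hlen : U.length = D.length)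
    (h : ∀ i, ¬ (U.getD i false = true ∧ D.getD i false = true)) :
    ∃ w, marks (some true) w = U ∧ marks (some false) w = D := by
  induction U generalizing D with
  | nil => exact ⟨[], rfl, by simpa [marks_nil, eq_comm] using hlen⟩
  | cons x U ih =>
    obtain _ | ⟨y, D⟩ := D
    · simp at hlen
    obtain ⟨w, rfl, rfl⟩ := ih (by simpa using hlen) fun i => h (i + 1)
    cases x <;> cases y
    · exact ⟨none :: w, rfl, rfl⟩
    · exact ⟨some false :: w, rfl, rfl⟩
    · exact ⟨some true :: w, rfl, rfl⟩
    · exact absurd ⟨rfl, rfl⟩ (h 0)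

theorem exists_pairTurns_eq {U D : List Bool} {i : ℕ} (hlen : U.length = D.length)
    (h : ∀ j, U.getD j false = true ∧ D.getD j false = true ↔ j = i) :
    ∃ A B, U ++ [true] = pairTurns true A B ∧ D ++ [true] = pairTurns false A B := by
  induction i generalizing U D with
  | zero =>
    obtain _ | ⟨x, U⟩ := U
    · simp at h
    obtain _ | ⟨y, D⟩ := D
    · simp at hlen
    obtain ⟨rfl, rfl⟩ := (h 0).2 rfl
    obtain ⟨B, rfl, rfl⟩ := exists_marks_eq (U := D) (D := U) (by simpa using hlen.symm)
      fun j hj => Nat.succ_ne_zero j ((h (j + 1)).1 hj.symm)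
    exact ⟨[], B, rfl, rfl⟩
  | succ i ih =>
    obtain _ | ⟨x, U⟩ := U
    · simpa using (h (i + 1)).2 rfl
    obtain _ | ⟨y, D⟩ := D
    · simp at hlen
    obtain ⟨A, B, hU, hD⟩ := ih (U := U) (D := D) (by simpa using hlen)
      fun j => by simpa using h (j + 1)
    obtain ⟨a, hx, hy⟩ : ∃ a : Option Bool, (a == some true) = x ∧ (a == some false) = y := by
      cases x <;> cases y
      · exact ⟨none, rfl, rfl⟩
      · exact ⟨some false, rfl, rfl⟩
      · exact ⟨some true, rfl, rfl⟩
      · exact absurd ((h 0).1 ⟨rfl, rfl⟩) (Nat.succ_ne_zero i).symm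
    exact ⟨A ++ [a], B, by rw [pairTurns_concat, hx, ← hU, List.cons_append],
      by rw [pairTurns_concat, hy, ← hD, List.cons_append]⟩

section Height

variable {h : ℕ} {A B : List (Option Bool)}

theorem prefixLE_pairTurns_iff (hA : A.count (some false) = A.count (some true) + h)
    (hB : B.count (some false) = B.count (some true) + h) :
    PrefixLE 0 (pairTurns true A B) (pairTurns false A B) ↔
      MotzkinFrom h A ∧ MotzkinFrom h B := by
  rw [pairTurns, pairTurns, prefixLE_append (h' := h) (by simp [length_marks])
      (by simpa [count_marks] using hA),
    prefixLE_reverse (by simp [length_marks]) (by simpa [count_marks] using hA),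
    prefixLE_cons_self, prefixLE_append (h' := 0) (by simp [length_marks])
      (by simp [count_marks, hB, add_comm]), prefixLE_cons_self, motzkinFrom_iff, motzkinFrom_iff]
  simp [hA, hB, prefixLE_nil]

theorem count_pairTurns_eq_and_prefixLE_iff :
    (pairTurns true A B).count true = (pairTurns false A B).count true ∧
      PrefixLE 0 (pairTurns true A B) (pairTurns false A B) ↔
        ∃ h, MotzkinFrom h A ∧ MotzkinFrom h B := by
  simp only [count_pairTurns, Bool.not_true, Bool.not_false]
  constructor
  · rintro ⟨hcount, hle⟩
    have hA := hle A.length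
    rw [count_take_pairTurns, count_take_pairTurns, zero_add] at hA
    obtain ⟨h, hA⟩ := Nat.exists_eq_add_of_le hA
    exact ⟨h, (prefixLE_pairTurns_iff hA (by omega)).1 hle⟩
  · rintro ⟨h, hA, hB⟩
    have hA' := hA.count_eq
    have hB' := hB.count_eq
    exact ⟨by omega, (prefixLE_pairTurns_iff hA' hB').2 ⟨hA, hB⟩⟩

theorem gap_pairTurns_false (hA : A.count (some false) = A.count (some true) + h) :
    gap (A.count (some true)) (pairTurns false A B) = downGap h A := by
  rw [downGap, ← gap_reverse_append_true (t := A.count (some true)) (by rw [count_marks, hA]),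
    pairTurns, List.append_cons]
  refine gap_append_left ?_ _
  rw [List.count_append, List.count_reverse, count_marks, List.count_singleton_self]
  omega

theorem gap_pairTurns_true (hA : A.count (some false) = A.count (some true) + h) :
    gap (A.count (some false) + 1) (pairTurns true A B) = downGap h B := by
  rw [hA, ← count_marks, ← List.count_reverse]
  exact gap_append_true_right _ _ _

end Height

/-- The word `w` of up and down steps corresponds to the pair `(A, B)`. Every path in `dyckRS n r s`
corresponds to a unique pair; in general `w` need not be a Dyck path. -/
def Encodes (w : List Bool) (A B : List (Option Bool)) : Prop :=
  firstStep w = true ∧ ∀ c, turns c w = pairTurns c A B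

section Encodes

variable {w : List Bool} {A B : List (Option Bool)}

theorem Encodes.eq_left {w' : List Bool} (hw : Encodes w A B) (hw' : Encodes w' A B) : w = w' :=
  turns_injective (hw.1.trans hw'.1.symm) ((hw.2 _).trans (hw'.2 _).symm)
    ((hw.2 _).trans (hw'.2 _).symm)

theorem Encodes.eq_right {A' B' : List (Option Bool)} (hw : Encodes w A B)
    (hw' : Encodes w A' B') : A = A' ∧ B = B' :=
  pairTurns_injective fun c => (hw.2 c).symm.trans (hw'.2 c)

theorem Encodes.isDyckWord_iff (hw : Encodes w A B) :
    IsDyckWord (A.length + B.length + 2) w ↔ ∃ h, MotzkinFrom h A ∧ MotzkinFrom h B := by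
  have hcount := count_turns w
  rw [hw.1, hw.2, hw.2] at hcount
  rw [DyckMotzkin.isDyckWord_iff, ← length_turns, ← length_turns, hw.2, hw.2, length_pairTurns,
    length_pairTurns, ← count_pairTurns_eq_and_prefixLE_iff]
  exact ⟨fun ⟨_, _, _, hle⟩ => ⟨hcount, hle⟩, fun ⟨_, hle⟩ => ⟨rfl, rfl, hw.1, hle⟩⟩

theorem Encodes.stat_pos_iff {j : ℕ} (hw : Encodes w A B)
    (hdyck : IsDyckWord (A.length + B.length + 2) w)
    (hj : j ∈ Finset.Icc 1 (A.length + B.length + 1)) :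
    0 < rStat w j ∧ 0 < sStat w j ↔ j = A.length + 1 := by
  obtain ⟨hj₁, hj₂⟩ := Finset.mem_Icc.1 hj
  obtain ⟨i, rfl⟩ := Nat.exists_eq_add_of_le' hj₁
  rw [rStat_succ_pos_iff hdyck (by omega), sStat_succ_pos_iff hdyck (by omega), hw.2, hw.2,
    Nat.add_right_cancel_iff, ← forall_getD_pairTurns_iff (B := B) (by omega), Bool.forall_bool,
    and_comm]

theorem Encodes.stats_eq_downGap {h : ℕ} (hw : Encodes w A B)
    (hdyck : IsDyckWord (A.length + B.length + 2) w)
    (hA : A.count (some false) = A.count (some true) + h) :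
    rStat w (A.length + 1) = downGap h A ∧ sStat w (A.length + 1) = downGap h B := by
  have hturn := (forall_getD_pairTurns_iff (A := A) (B := B) (by omega)).2 rfl
  rw [rStat_succ_eq_gap hdyck (by omega), sStat_succ_eq_gap hdyck (by omega), hw.2, hw.2,
    if_pos (hturn true), if_pos (hturn false), count_take_pairTurns, count_take_pairTurns,
    gap_pairTurns_false hA, gap_pairTurns_true hA]
  exact ⟨rfl, rfl⟩

theorem Encodes.mem_dyckRS_iff {r s : ℕ} (hr : 0 < r) (hs : 0 < s) (hw : Encodes w A B) :
    w ∈ dyckRS (A.length + B.length + 2) r s ↔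
      ∃ h, (MotzkinFrom h A ∧ downGap h A = r) ∧ (MotzkinFrom h B ∧ downGap h B = s) := by
  constructor
  · rintro ⟨hdyck, i, hi, hpos, rfl, rfl, -⟩
    obtain ⟨h, hA, hB⟩ := hw.isDyckWord_iff.1 hdyck
    obtain rfl := (hw.stat_pos_iff hdyck hi).1 hpos
    obtain ⟨hr', hs'⟩ := hw.stats_eq_downGap hdyck hA.count_eq
    exact ⟨h, ⟨hA, hr'.symm⟩, hB, hs'.symm⟩
  · rintro ⟨h, ⟨hA, rfl⟩, hB, rfl⟩
    have hdyck := hw.isDyckWord_iff.2 ⟨h, hA, hB⟩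
    obtain ⟨hr', hs'⟩ := hw.stats_eq_downGap hdyck hA.count_eq
    refine ⟨hdyck, A.length + 1, Finset.mem_Icc.2 (by omega), by rw [hr', hs']; exact ⟨hr, hs⟩,
      hr', hs', fun j hj => (hw.stat_pos_iff hdyck hj).1⟩

theorem exists_encodes {h : ℕ} (hA : MotzkinFrom h A) (hB : MotzkinFrom h B) :
    ∃ w, Encodes w A B := by
  obtain ⟨w, hw, hU, hD⟩ := exists_turns_eq true (pairTurns true A B) (pairTurns false A B)
    (count_pairTurns_eq_and_prefixLE_iff.2 ⟨h, hA, hB⟩).1 (by simp [getLast?_pairTurns])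
  exact ⟨w, hw, Bool.forall_bool.2 ⟨hD, hU⟩⟩

theorem exists_encodes_of_mem_dyckRS {n r s : ℕ} (hw : w ∈ dyckRS (n + 2) r s) :
    ∃ A B, Encodes w A B ∧ A.length + B.length = n := by
  obtain ⟨hdyck, i, hi, hpos, -, -, huniq⟩ := hw
  obtain ⟨U, D, hU, hD, hUn, hDn⟩ := exists_turns_eq_append hdyck (Nat.succ_pos _)
  have hiff {j : ℕ} (hj : j ≤ n) : 0 < rStat w (j + 1) ∧ 0 < sStat w (j + 1) ↔
      U.getD j false = true ∧ D.getD j false = true := by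
    rw [rStat_succ_pos_iff hdyck (by omega), sStat_succ_pos_iff hdyck (by omega), hU, hD,
      List.getD_append _ _ _ _ (by omega), List.getD_append _ _ _ _ (by omega)]
  obtain ⟨hi₁, hi₂⟩ := Finset.mem_Icc.1 hi
  obtain ⟨i, rfl⟩ := Nat.exists_eq_add_of_le' hi₁
  have hcommon (j : ℕ) : U.getD j false = true ∧ D.getD j false = true ↔ j = i := by
    refine ⟨fun hj => ?_, fun hj => hj ▸ (hiff (by omega)).1 hpos⟩
    have hjn : j < U.length := by
      by_contra! hjn
      exact Bool.false_ne_true ((List.getD_eq_default _ _ hjn).symm.trans hj.1)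
    exact Nat.succ_injective (huniq _ (Finset.mem_Icc.2 (by omega)) ((hiff (by omega)).2 hj))
  obtain ⟨A, B, hUA, hDA⟩ := exists_pairTurns_eq (by omega) hcommon
  have hlen := congrArg List.length hUA
  rw [length_pairTurns, List.length_append, List.length_singleton] at hlen
  exact ⟨A, B, ⟨(isDyckWord_iff.1 hdyck).2.2.1,
    Bool.forall_bool.2 ⟨hD.trans hDA, hU.trans hUA⟩⟩, by omega⟩

end Encodes

/-! ### Enumeration -/

/-- The pairs of words of total length `N` from height `h` to height `0` that encode the paths in
`dyckRS (N + 2) r s`: `r` and `s` are the distances from the `h`-th down step to the next one. -/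
def gapPairs (N r s h : ℕ) : Set (List (Option Bool) × List (Option Bool)) :=
  {x | x.1.length + x.2.length = N ∧ (MotzkinFrom h x.1 ∧ downGap h x.1 = r) ∧
    (MotzkinFrom h x.2 ∧ downGap h x.2 = s)}

theorem finite_gapPairs (N r s h : ℕ) : (gapPairs N r s h).Finite :=
  ((List.finite_length_le _ N).prod (List.finite_length_le _ N)).subset fun _ hx =>
    ⟨Nat.le.intro hx.1, Nat.le.intro ((add_comm _ _).trans hx.1)⟩

theorem iUnion_gapPairs (N r s : ℕ) :
    ⋃ h, gapPairs N r s h = ⋃ h ∈ (Finset.range (N + 1) : Set ℕ), gapPairs N r s h := by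
  refine Set.Subset.antisymm (Set.iUnion_subset fun h x hx => ?_)
    (Set.iUnion₂_subset_iUnion _ _)
  have hcount := hx.2.1.1.count_eq
  have hle := List.count_le_length (a := some false) (l := x.1)
  have hlen := hx.1
  exact Set.mem_biUnion (Finset.mem_coe.2 (Finset.mem_range.2 (by omega))) hx

theorem disjoint_gapPairs (N r s : ℕ) {h h' : ℕ} (hne : h ≠ h') :
    Disjoint (gapPairs N r s h) (gapPairs N r s h') :=
  Set.disjoint_left.2 fun _ hx hx' =>
    hne (Nat.add_left_cancel (hx.2.1.1.count_eq.symm.trans hx'.2.1.1.count_eq))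

theorem ncard_iUnion_gapPairs (N r s : ℕ) : ((⋃ h, gapPairs N r s h).ncard : ℤ) =
    coeff N (∑ h ∈ Finset.range (N + 1), gapSeries h 0 r * gapSeries h 0 s) := by
  rw [iUnion_gapPairs, Set.Finite.ncard_biUnion (Finset.finite_toSet _)
    (fun h _ => finite_gapPairs N r s h) (fun h _ h' _ hne => disjoint_gapPairs N r s hne),
    finsum_mem_coe_finset, map_sum, Nat.cast_sum]
  simp only [gapSeries, add_zero, coeff_wordSeries_mul, gapPairs]

theorem ncard_dyckRS {r s : ℕ} (hr : 0 < r) (hs : 0 < s) (N : ℕ) :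
    (dyckRS (N + 2) r s).ncard = (⋃ h, gapPairs N r s h).ncard := by
  have hexists : ∀ x ∈ ⋃ h, gapPairs N r s h, ∃ w, Encodes w x.1 x.2 := fun x hx =>
    have ⟨_, hx⟩ := Set.mem_iUnion.1 hx
    exists_encodes hx.2.1.1 hx.2.2.1
  choose! f hf using hexists
  refine (Set.BijOn.ncard_eq (f := f) ⟨fun x hx => ?_, fun x hx x' hx' heq => ?_,
    fun w hw => ?_⟩).symm
  · obtain ⟨h, rfl, hgap⟩ := Set.mem_iUnion.1 hx
    exact ((hf x hx).mem_dyckRS_iff hr hs).2 ⟨h, hgap⟩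
  · exact Prod.ext_iff.2 ((hf x hx).eq_right (heq ▸ hf x' hx'))
  · obtain ⟨A, B, hAB, rfl⟩ := exists_encodes_of_mem_dyckRS hw
    obtain ⟨h, hgap⟩ := (hAB.mem_dyckRS_iff hr hs).1 hw
    have hmem : (A, B) ∈ ⋃ h, gapPairs (A.length + B.length) r s h :=
      Set.mem_iUnion.2 ⟨h, rfl, hgap⟩
    exact ⟨(A, B), hmem, (hf _ hmem).eq_left hAB⟩

theorem motzkinBallotZ_natCast (n k : ℕ) : motzkinBallotZ n k = motzkinBallot n k :=
  if_pos n.cast_nonneg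

theorem sum_range_eq_sum_Icc_motzkinZ (N k : ℕ) :
    ∑ i ∈ Finset.range (N - 1), (i + 1) * (motzkin i : ℤ) * motzkinBallot (N - 2 - i) (k + 1) =
      ∑ i ∈ Finset.Icc (0 : ℤ) (N - 2 - k),
        (i + 1) * motzkinZ i * motzkinBallotZ (N - 2 - i) (k + 1) := by
  symm
  refine Finset.sum_of_injOn Int.toNat (fun i hi j hj hij => ?_) (fun i hi => ?_)
    (fun i hi hi' => ?_) fun i hi => ?_
  · rw [Finset.mem_coe, Finset.mem_Icc] at hi hj
    omega
  · rw [Finset.mem_coe, Finset.mem_Icc] at hi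
    rw [Finset.mem_coe, Finset.mem_range]
    omega
  · rw [Finset.mem_range] at hi
    have hlt : N - 2 - i < k := by
      by_contra! hle
      exact hi' ⟨i, Finset.mem_coe.2 (Finset.mem_Icc.2 (by omega)), Int.toNat_natCast i⟩
    rw [motzkinBallot_eq_zero hlt, Nat.cast_zero, mul_zero]
  · rw [Finset.mem_Icc] at hi
    rw [motzkinZ, if_pos hi.1, motzkinBallotZ, if_pos (by omega), Int.toNat_of_nonneg hi.1,
      show ((N : ℤ) - 2 - i).toNat = N - 2 - i.toNat by omega]

end DyckMotzkin

/-- **Proposition.** For `r, s ≥ 1` and `n ≥ r + s`,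
`|𝒟ₙ^{r,s}| = T_{n-2,r+s-1} + Σ_{i=0}^{n-2-s-r} (i+1)·Mᵢ·T_{n-4-i,r+s-1}`. -/
theorem dyckRS_count (r s n : ℕ) (hr : 1 ≤ r) (hs : 1 ≤ s) (hn : r + s ≤ n) :
    ((dyckRS n r s).ncard : ℤ) =
      motzkinBallotZ ((n : ℤ) - 2) (r + s - 1) +
        ∑ i ∈ Finset.Icc (0 : ℤ) ((n : ℤ) - 2 - s - r),
          (i + 1) * motzkinZ i * motzkinBallotZ ((n : ℤ) - 4 - i) (r + s - 1) := by
  obtain ⟨r, rfl⟩ := Nat.exists_eq_add_of_le' hr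
  obtain ⟨s, rfl⟩ := Nat.exists_eq_add_of_le' hs
  obtain ⟨N, rfl⟩ : ∃ N, n = N + 2 := ⟨n - 2, by omega⟩
  have hlead : ((N + 2 : ℕ) : ℤ) - 2 = N := by lia
  have hbound : (N : ℤ) - (s + 1 : ℕ) - (r + 1 : ℕ) = N - 2 - (r + s : ℕ) := by lia
  have hindex (i : ℤ) : ((N + 2 : ℕ) : ℤ) - 4 - i = N - 2 - i := by lia
  have hposition : r + 1 + (s + 1) - 1 = r + s + 1 := by lia
  simp only [hlead, hbound, hindex, hposition]
  rw [DyckMotzkin.ncard_dyckRS r.succ_pos s.succ_pos, DyckMotzkin.ncard_iUnion_gapPairs,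
    DyckMotzkin.coeff_sum_gapSeries_mul, DyckMotzkin.sum_range_eq_sum_Icc_motzkinZ,
    DyckMotzkin.motzkinBallotZ_natCast]
end
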